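/- arXiv:2205.11904 — 2 statements merged into one kernel-verified Lean document; each statement's English description precedes it below -/
import Mathlib

section
/- Let (X,T) be a topological dynamical system with a compatible metric d. Then the upper metric mean dimension satisfies mdim_M^+(T,X,d) = limsup_{ε→0} [ sup_{μ∈E(X,T)} R_{μ,L∞}(ε) ] / log(1/ε), where the supremum is over all ergodic T-invariant Borel probability measures. -/
open Filter MeasureTheory Set
open scoped ENNReal Topology

noncomputable section

namespace MMD

variable {X : Type*}

/-- The `n`-th Bowen metric `d_n(x,y) = max_{0 ≤ j ≤ n-1} d(T^j x, T^j y)`. -/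
noncomputable def bowenDist [PseudoMetricSpace X] (T : X → X) (n : ℕ) (x y : X) : ℝ :=
  ⨆ j : Fin n, dist (T^[(j : ℕ)] x) (T^[(j : ℕ)] y)

/-- `r_n(T,d,ε,Z)`: minimal cardinality of an `(n,ε)`-spanning set of `Z`. -/
noncomputable def spanNum [PseudoMetricSpace X] (T : X → X) (n : ℕ) (ε : ℝ) (Z : Set X) : ℕ :=
  sInf {k | ∃ E : Finset X, E.card = k ∧ ∀ z ∈ Z, ∃ y ∈ E, bowenDist T n z y < ε}

/-- `s_n(T,d,ε,Z)`: maximal cardinality of an `(n,ε)`-separated subset of `Z`. -/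
noncomputable def sepNum [PseudoMetricSpace X] (T : X → X) (n : ℕ) (ε : ℝ) (Z : Set X) : ℕ :=
  sSup {k | ∃ F : Finset X, ↑F ⊆ Z ∧ F.card = k ∧
    ∀ x ∈ F, ∀ y ∈ F, x ≠ y → ε ≤ bowenDist T n x y}

/-- `limsup_{n→∞} (1/n) log r_n(T,d,ε,X)`. -/
noncomputable def spanGrowth [PseudoMetricSpace X] (T : X → X) (ε : ℝ) : ℝ≥0∞ :=
  Filter.limsup (fun n : ℕ => ENNReal.ofReal (Real.log (spanNum T n ε Set.univ)) / (n : ℝ≥0∞))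
    Filter.atTop

/-- Upper metric mean dimension. -/
noncomputable def mdimMUpper [PseudoMetricSpace X] (T : X → X) : ℝ≥0∞ :=
  Filter.limsup (fun ε : ℝ => spanGrowth T ε / ENNReal.ofReal (Real.log (1 / ε)))
    (nhdsWithin 0 (Set.Ioi 0))

/-- Lower metric mean dimension. -/
noncomputable def mdimMLower [PseudoMetricSpace X] (T : X → X) : ℝ≥0∞ :=
  Filter.liminf (fun ε : ℝ => spanGrowth T ε / ENNReal.ofReal (Real.log (1 / ε)))
    (nhdsWithin 0 (Set.Ioi 0))

/-- A finite (Borel) partition given as a finite set of measurable, pairwise disjoint sets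
covering the space. -/
def IsFinPartition {Y : Type*} [MeasurableSpace Y] (P : Finset (Set Y)) : Prop :=
  (∀ s ∈ P, MeasurableSet s) ∧ (∀ s ∈ P, ∀ t ∈ P, s ≠ t → Disjoint s t) ∧
    ⋃₀ (P : Set (Set Y)) = Set.univ

/-- Mutual information `I(ξ;η)` of two random variables, as the supremum over finite
measurable partitions of the target spaces. -/
noncomputable def mutualInfo {Ω A B : Type*} [MeasurableSpace Ω] [MeasurableSpace A]
    [MeasurableSpace B] (P : Measure Ω) (ξ : Ω → A) (η : Ω → B) : ℝ≥0∞ :=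
  ⨆ (p : Finset (Set A)) (_ : IsFinPartition p) (q : Finset (Set B)) (_ : IsFinPartition q),
    ENNReal.ofReal (∑ s ∈ p, ∑ t ∈ q,
      (P (ξ ⁻¹' s ∩ η ⁻¹' t)).toReal *
        Real.log ((P (ξ ⁻¹' s ∩ η ⁻¹' t)).toReal /
          ((P (ξ ⁻¹' s)).toReal * (P (η ⁻¹' t)).toReal)))

/-- The `L^∞` rate distortion function `R_{μ,L∞}(ε,s)`: the infimum of `I(ξ;η)/n` over all
`n ≥ 1` and all joint distributions `ν` of `(ξ, (η_0,…,η_{n-1}))` such that `ξ` has law `μ`,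
the `η_k` take (almost surely) finitely many values, and
`E(#{0 ≤ k ≤ n-1 : d(T^k ξ, η_k) ≥ ε}) < s n`. -/
noncomputable def RDistLInftyS [PseudoMetricSpace X] [MeasurableSpace X] (T : X → X)
    (μ : Measure X) (ε s : ℝ) : ℝ≥0∞ :=
  ⨅ (n : ℕ) (_ : 0 < n) (ν : Measure (X × (Fin n → X))) (_ : IsProbabilityMeasure ν)
    (_ : ν.map Prod.fst = μ) (_ : ∃ S : Finset X, ν {p | ∀ k, p.2 k ∈ S} = 1)
    (_ : ∫⁻ p, (Nat.card {k : Fin n // ε ≤ dist (T^[(k : ℕ)] p.1) (p.2 k)} : ℝ≥0∞) ∂ν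
        < ENNReal.ofReal (s * n)),
    mutualInfo ν Prod.fst Prod.snd / (n : ℝ≥0∞)

/-- `R_{μ,L∞}(ε) = lim_{s→0} R_{μ,L∞}(ε,s)` (the limit equals the supremum over `s > 0`
by monotonicity). -/
noncomputable def RDistLInfty [PseudoMetricSpace X] [MeasurableSpace X] (T : X → X)
    (μ : Measure X) (ε : ℝ) : ℝ≥0∞ :=
  ⨆ (s : ℝ) (_ : 0 < s), RDistLInftyS T μ ε s

/-- The `L¹` rate distortion function `R_{μ,1}(ε)`. -/
noncomputable def RDistL1 [PseudoMetricSpace X] [MeasurableSpace X] (T : X → X)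
    (μ : Measure X) (ε : ℝ) : ℝ≥0∞ :=
  ⨅ (n : ℕ) (_ : 0 < n) (ν : Measure (X × (Fin n → X))) (_ : IsProbabilityMeasure ν)
    (_ : ν.map Prod.fst = μ) (_ : ∃ S : Finset X, ν {p | ∀ k, p.2 k ∈ S} = 1)
    (_ : ∫⁻ p, ∑ k : Fin n, ENNReal.ofReal (dist (T^[(k : ℕ)] p.1) (p.2 k)) ∂ν
        < ENNReal.ofReal (ε * n)),
    mutualInfo ν Prod.fst Prod.snd / (n : ℝ≥0∞)

/-- `R^δ_μ(T,n,ε)`: minimal number of Bowen `(n,ε)`-balls whose union has `μ`-measure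
greater than `1 - δ`. -/
noncomputable def katokNum [PseudoMetricSpace X] [MeasurableSpace X] (T : X → X)
    (μ : Measure X) (n : ℕ) (ε δ : ℝ) : ℕ :=
  sInf {k | ∃ E : Finset X, E.card = k ∧
    ENNReal.ofReal (1 - δ) < μ (⋃ x ∈ E, {y | bowenDist T n x y < ε})}

/-- `h̄^K_μ(T,ε,δ)`. -/
noncomputable def katokUpperD [PseudoMetricSpace X] [MeasurableSpace X] (T : X → X)
    (μ : Measure X) (ε δ : ℝ) : ℝ≥0∞ :=
  Filter.limsup (fun n : ℕ => ENNReal.ofReal (Real.log (katokNum T μ n ε δ)) / (n : ℝ≥0∞))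
    Filter.atTop

/-- `ḥ^K_μ(T,ε,δ)`. -/
noncomputable def katokLowerD [PseudoMetricSpace X] [MeasurableSpace X] (T : X → X)
    (μ : Measure X) (ε δ : ℝ) : ℝ≥0∞ :=
  Filter.liminf (fun n : ℕ => ENNReal.ofReal (Real.log (katokNum T μ n ε δ)) / (n : ℝ≥0∞))
    Filter.atTop

/-- `h̄^K_μ(T,ε) = lim_{δ→0} h̄^K_μ(T,ε,δ)` (equal to the supremum over `δ ∈ (0,1)` by
monotonicity). -/
noncomputable def katokUpper [PseudoMetricSpace X] [MeasurableSpace X] (T : X → X)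
    (μ : Measure X) (ε : ℝ) : ℝ≥0∞ :=
  ⨆ (δ : ℝ) (_ : δ ∈ Set.Ioo (0 : ℝ) 1), katokUpperD T μ ε δ

/-- `ḥ^K_μ(T,ε) = lim_{δ→0} ḥ^K_μ(T,ε,δ)`. -/
noncomputable def katokLower [PseudoMetricSpace X] [MeasurableSpace X] (T : X → X)
    (μ : Measure X) (ε : ℝ) : ℝ≥0∞ :=
  ⨆ (δ : ℝ) (_ : δ ∈ Set.Ioo (0 : ℝ) 1), katokLowerD T μ ε δ

/-- The empirical measure `(1/n) Σ_{j=0}^{n-1} δ_{T^j x}`. -/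
noncomputable def empMeas [MeasurableSpace X] (T : X → X) (n : ℕ) (x : X) : Measure X :=
  (n : ℝ≥0∞)⁻¹ • ∑ j ∈ Finset.range n, Measure.dirac (T^[j] x)

/-- Pfister–Sullivan entropy `PS_μ(T,d,ε)`: infimum over weak* open neighborhoods `F` of `μ`
of `limsup_n (1/n) log s_n(T,d,ε,X_{n,F})`, where
`X_{n,F} = {x : (1/n) Σ_{j<n} δ_{T^j x} ∈ F}`. -/
noncomputable def PSent [MetricSpace X] [MeasurableSpace X] [OpensMeasurableSpace X]
    (T : X → X) (μ : ProbabilityMeasure X) (ε : ℝ) : ℝ≥0∞ :=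
  ⨅ (F : Set (ProbabilityMeasure X)) (_ : IsOpen F) (_ : μ ∈ F),
    Filter.limsup (fun n : ℕ => ENNReal.ofReal (Real.log (sepNum T n ε
      {x : X | ∃ h : IsProbabilityMeasure (empMeas T n x),
        (⟨empMeas T n x, h⟩ : ProbabilityMeasure X) ∈ F})) / (n : ℝ≥0∞)) Filter.atTop

/-- Partition entropy `H_μ(P) = Σ_{A∈P} -μ(A) log μ(A)`. -/
noncomputable def entP [MeasurableSpace X] (μ : Measure X) (P : Finset (Set X)) : ℝ≥0∞ :=
  ∑ A ∈ P, ENNReal.ofReal (-((μ A).toReal * Real.log ((μ A).toReal)))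

/-- The join `P^n = ∨_{j=0}^{n-1} T^{-j} P`. -/
noncomputable def joinN (T : X → X) (P : Finset (Set X)) (n : ℕ) : Finset (Set X) :=
  letI : DecidableEq (Set X) := Classical.decEq _
  (Fintype.piFinset (fun _ : Fin n => P)).image (fun f => ⋂ j : Fin n, T^[(j : ℕ)] ⁻¹' f j)

/-- `h_μ(T,P) = lim_n H_μ(P^n)/n` (the limit exists and equals the liminf). -/
noncomputable def entRate [MeasurableSpace X] (T : X → X) (μ : Measure X)
    (P : Finset (Set X)) : ℝ≥0∞ :=
  Filter.liminf (fun n : ℕ => entP μ (joinN T P n) / (n : ℝ≥0∞)) Filter.atTop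

/-- `inf { h_μ(T,P) : P a finite Borel partition with diam P ≤ ε }`. -/
noncomputable def infEntRate [PseudoMetricSpace X] [MeasurableSpace X] (T : X → X)
    (μ : Measure X) (ε : ℝ) : ℝ≥0∞ :=
  ⨅ (P : Finset (Set X)) (_ : IsFinPartition P) (_ : ∀ s ∈ P, Metric.diam s ≤ ε),
    entRate T μ P

/-- Kolmogorov–Sinai entropy `h_μ(T)`. -/
noncomputable def ksEntropy [MeasurableSpace X] (T : X → X) (μ : Measure X) : ℝ≥0∞ :=
  ⨆ (P : Finset (Set X)) (_ : IsFinPartition P), entRate T μ P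

/-- A finite open cover. -/
def IsFinOpenCover [TopologicalSpace X] (α : Finset (Set X)) : Prop :=
  (∀ A ∈ α, IsOpen A) ∧ ⋃₀ (α : Set (Set X)) = Set.univ

/-- `ord(β) = max_x #{B ∈ β : x ∈ B} - 1`. -/
noncomputable def ordCover (β : Finset (Set X)) : ℕ :=
  sSup {k | ∃ x : X, Nat.card {B : Set X // B ∈ β ∧ x ∈ B} = k} - 1

/-- `D(α) = min_{β ≻ α} ord(β)`, over finite open covers `β` refining `α`. -/
noncomputable def Dcover [TopologicalSpace X] (α : Finset (Set X)) : ℕ :=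
  sInf {k | ∃ β : Finset (Set X), IsFinOpenCover β ∧ (∀ B ∈ β, ∃ A ∈ α, B ⊆ A) ∧
    ordCover β = k}

/-- Mean (topological) dimension `mdim(X,T) = sup_α lim_n D(α^n)/n`. -/
noncomputable def mdimTop [TopologicalSpace X] (T : X → X) : ℝ≥0∞ :=
  ⨆ (α : Finset (Set X)) (_ : IsFinOpenCover α),
    Filter.liminf (fun n : ℕ => (Dcover (joinN T α n) : ℝ≥0∞) / (n : ℝ≥0∞)) Filter.atTop

/-- The marker property for a homeomorphism. -/
def MarkerProperty [TopologicalSpace X] (T : X ≃ₜ X) : Prop :=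
  ∀ N : ℕ, 0 < N → ∃ U : Set X, IsOpen U ∧
    (∀ n : ℕ, 1 ≤ n → n ≤ N → U ∩ (⇑T)^[n] '' U = ∅) ∧
    ⋃ n : ℤ, ⇑(T.toEquiv ^ n) '' U = Set.univ

/-- Upper dimension `limsup_{ε→0} F(μ,ε)/log(1/ε)` associated with a candidate `F`. -/
noncomputable def dimFUpper [MeasurableSpace X] (F : Measure X → ℝ → ℝ≥0∞)
    (μ : Measure X) : ℝ≥0∞ :=
  Filter.limsup (fun ε : ℝ => F μ ε / ENNReal.ofReal (Real.log (1 / ε)))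
    (nhdsWithin 0 (Set.Ioi 0))

/-- Lower dimension `liminf_{ε→0} F(μ,ε)/log(1/ε)` associated with a candidate `F`. -/
noncomputable def dimFLower [MeasurableSpace X] (F : Measure X → ℝ → ℝ≥0∞)
    (μ : Measure X) : ℝ≥0∞ :=
  Filter.liminf (fun ε : ℝ => F μ ε / ENNReal.ofReal (Real.log (1 / ε)))
    (nhdsWithin 0 (Set.Ioi 0))

/-- A candidate function: for each invariant probability measure `μ`, `F(μ,·)` is
non-decreasing as `ε` decreases, and `F(μ,ε) → h_μ(T)` as `ε → 0⁺`. -/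
def IsCandidate [MeasurableSpace X] (T : X → X) (F : Measure X → ℝ → ℝ≥0∞) : Prop :=
  ∀ μ : Measure X, IsProbabilityMeasure μ → MeasurePreserving T μ μ →
    (∀ ε₁ ε₂ : ℝ, 0 < ε₁ → ε₁ ≤ ε₂ → F μ ε₂ ≤ F μ ε₁) ∧
    Filter.Tendsto (F μ) (nhdsWithin 0 (Set.Ioi 0)) (nhds (ksEntropy T μ))

end MMD

open MMD

namespace MMDP
open Real (negMulLog)

def chi (ε t : ℝ) : ℝ := max 0 (min 1 ((t - 2 * ε) / ε))

lemma chi_nonneg (ε t : ℝ) : 0 ≤ chi ε t := le_max_left _ _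
lemma chi_le_one (ε t : ℝ) : chi ε t ≤ 1 := max_le zero_le_one (min_le_left _ _)
lemma chi_eq_zero {ε t : ℝ} (hε : 0 < ε) (h : t ≤ 2 * ε) : chi ε t = 0 := by
  unfold chi
  have : (t - 2 * ε) / ε ≤ 0 := div_nonpos_of_nonpos_of_nonneg (by linarith) hε.le
  exact max_eq_left ((min_le_right _ _).trans this)
lemma chi_eq_one {ε t : ℝ} (hε : 0 < ε) (h : 3 * ε ≤ t) : chi ε t = 1 := by
  unfold chi
  have : 1 ≤ (t - 2 * ε) / ε := by rw [le_div_iff₀ hε]; linarith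
  rw [min_eq_left this]; simp
lemma continuous_chi (ε : ℝ) : Continuous (chi ε) := by unfold chi; fun_prop

section
variable {X : Type*} [MetricSpace X]

def cost (T : X → X) (ε : ℝ) (W : Finset ℕ) (l : ℕ → X) (x : X) : ℝ :=
  ∑ k ∈ W, chi ε (dist (T^[k] x) (l k))

lemma cost_nonneg (T : X → X) (ε : ℝ) (W : Finset ℕ) (l : ℕ → X) (x : X) :
    0 ≤ cost T ε W l x := Finset.sum_nonneg fun _ _ => chi_nonneg _ _

lemma cost_le (T : X → X) (ε : ℝ) (W : Finset ℕ) (l : ℕ → X) (x : X) :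
    cost T ε W l x ≤ W.card := by
  refine (Finset.sum_le_sum fun _ _ => chi_le_one _ _).trans ?_
  simp

lemma continuous_cost {T : X → X} (hT : Continuous T) (ε : ℝ) (W : Finset ℕ) (l : ℕ → X) :
    Continuous (cost T ε W l) := by
  unfold cost
  refine continuous_finset_sum _ fun k _ => (continuous_chi ε).comp ?_
  exact (hT.iterate k).dist continuous_const

variable [MeasurableSpace X]

structure IsKer {β : Type} [Fintype β] (φ : β → X → ℝ) : Prop where
  meas : ∀ b, Measurable (φ b)
  nonneg : ∀ b x, 0 ≤ φ b x
  sum_one : ∀ x, ∑ b, φ b x = 1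

lemma IsKer.le_one {β : Type} [Fintype β] {φ : β → X → ℝ} (h : IsKer φ) (b : β) (x : X) :
    φ b x ≤ 1 := by
  rw [← h.sum_one x]
  exact Finset.single_le_sum (f := fun b => φ b x) (fun i _ => h.nonneg i x) (Finset.mem_univ b)

def J (T : X → X) (ε θ : ℝ) (μ : Measure X) (W : Finset ℕ) {β : Type} [Fintype β]
    (φ : β → X → ℝ) (L : β → ℕ → X) : ℝ :=
  ∑ b, (negMulLog (∫ x, φ b x ∂μ) - ∫ x, negMulLog (φ b x) ∂μ
    + θ * ∫ x, φ b x * cost T ε W (L b) x ∂μ)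

def Ach (T : X → X) (ε θ : ℝ) (μ : Measure X) (W : Finset ℕ) (v : ℝ) : Prop :=
  ∃ (β : Type) (_ : Fintype β) (φ : β → X → ℝ) (L : β → ℕ → X),
    IsKer φ ∧ J T ε θ μ W φ L ≤ v

lemma negMulLog_le_one {t : ℝ} (h0 : 0 ≤ t) (h1 : t ≤ 1) : negMulLog t ≤ 1 := by
  rcases h0.eq_or_lt with rfl | h0
  · simp
  · have := Real.one_sub_inv_le_log_of_pos h0
    unfold negMulLog
    have h3 : t * (1 - t⁻¹) ≤ t * Real.log t := mul_le_mul_of_nonneg_left this h0.le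
    have : t * t⁻¹ = 1 := mul_inv_cancel₀ h0.ne'
    nlinarith

lemma integrable_of_bdd {μ : Measure X} [IsFiniteMeasure μ] {f : X → ℝ} (hf : Measurable f)
    {C : ℝ} (h0 : ∀ x, 0 ≤ f x) (h1 : ∀ x, f x ≤ C) : Integrable f μ :=
  Integrable.of_bound hf.aestronglyMeasurable C
    (Eventually.of_forall fun x => by rw [Real.norm_eq_abs, abs_of_nonneg (h0 x)]; exact h1 x)

section
variable {β : Type} [Fintype β] {φ : β → X → ℝ} (h : IsKer φ) (μ : Measure X)
include h

lemma IsKer.int [IsFiniteMeasure μ] (b : β) : Integrable (φ b) μ :=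
  integrable_of_bdd (h.meas b) (h.nonneg b) (h.le_one b)

lemma IsKer.meas_nml (b : β) : Measurable (fun x => negMulLog (φ b x)) :=
  Real.continuous_negMulLog.measurable.comp (h.meas b)

lemma IsKer.int_nml [IsFiniteMeasure μ] (b : β) : Integrable (fun x => negMulLog (φ b x)) μ :=
  integrable_of_bdd (h.meas_nml b)
    (fun x => Real.negMulLog_nonneg (h.nonneg b x) (h.le_one b x))
    (fun x => negMulLog_le_one (h.nonneg b x) (h.le_one b x))

lemma IsKer.int_cost [BorelSpace X] [IsFiniteMeasure μ] {T : X → X} (hT : Continuous T) (ε : ℝ) (W : Finset ℕ)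
    (l : ℕ → X) (b : β) : Integrable (fun x => φ b x * cost T ε W l x) μ := by
  refine integrable_of_bdd (C := W.card) ((h.meas b).mul (continuous_cost hT ε W l).measurable)
    (fun x => mul_nonneg (h.nonneg b x) (cost_nonneg _ _ _ _ _)) fun x => ?_
  calc _ ≤ 1 * (W.card : ℝ) := mul_le_mul (h.le_one b x) (cost_le _ _ _ _ _)
        (cost_nonneg _ _ _ _ _) zero_le_one
    _ = _ := one_mul _

lemma IsKer.sum_integral [IsProbabilityMeasure μ] : ∑ b, ∫ x, φ b x ∂μ = 1 := by
  rw [← integral_finset_sum _ fun b _ => h.int μ b]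
  simp [h.sum_one]

lemma J_nonneg [BorelSpace X] [IsProbabilityMeasure μ] {T : X → X} {ε θ : ℝ} (hθ : 0 ≤ θ) (W : Finset ℕ) (L : β → ℕ → X) :
    0 ≤ J T ε θ μ W φ L := by
  refine Finset.sum_nonneg fun b _ => ?_
  have h1 : ∫ x, negMulLog (φ b x) ∂μ ≤ negMulLog (∫ x, φ b x ∂μ) :=
    Real.concaveOn_negMulLog.le_map_integral Real.continuous_negMulLog.continuousOn isClosed_Ici
      (Eventually.of_forall fun x => h.nonneg b x) (h.int μ b) (h.int_nml μ b)
  have h2 : 0 ≤ ∫ x, φ b x * cost T ε W (L b) x ∂μ :=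
    integral_nonneg fun x => mul_nonneg (h.nonneg b x) (cost_nonneg _ _ _ _ _)
  have := mul_nonneg hθ h2
  linarith

end

/-- subadditivity of entropy -/
lemma entropy_subadd {β γ : Type} [Fintype β] [Fintype γ] (r : β → γ → ℝ)
    (h0 : ∀ b c, 0 ≤ r b c) (h1 : ∑ b, ∑ c, r b c = 1) :
    ∑ b, ∑ c, negMulLog (r b c) ≤ ∑ b, negMulLog (∑ c, r b c) + ∑ c, negMulLog (∑ b, r b c) := by
  set p : β → ℝ := fun b => ∑ c, r b c
  set q : γ → ℝ := fun c => ∑ b, r b c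
  have hp : ∑ b, p b = 1 := h1
  have hq : ∑ c, q c = 1 := by rw [← h1, Finset.sum_comm]
  have e1 : ∑ b, negMulLog (p b) = ∑ b, ∑ c, -(r b c * Real.log (p b)) := by
    refine Finset.sum_congr rfl fun b _ => ?_
    rw [Finset.sum_neg_distrib, ← Finset.sum_mul]; simp [negMulLog, p]
  have e2 : ∑ c, negMulLog (q c) = ∑ b, ∑ c, -(r b c * Real.log (q c)) := by
    rw [Finset.sum_comm]
    refine Finset.sum_congr rfl fun b _ => ?_
    rw [Finset.sum_neg_distrib, ← Finset.sum_mul]; simp [negMulLog, q]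
  have key : ∀ b c, negMulLog (r b c) ≤
      -(r b c * Real.log (p b)) + -(r b c * Real.log (q c)) + (p b * q c - r b c) := by
    intro b c
    have hpb : r b c ≤ p b := Finset.single_le_sum (f := fun c => r b c) (fun i _ => h0 b i) (Finset.mem_univ c)
    have hqc : r b c ≤ q c := Finset.single_le_sum (f := fun b => r b c) (fun i _ => h0 i c) (Finset.mem_univ b)
    rcases (h0 b c).eq_or_lt with h | h
    · rw [← h]; simp
      exact mul_nonneg ((h0 b c).trans hpb) ((h0 b c).trans hqc)
    · have pp := h.trans_le hpb
      have qp := h.trans_le hqc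
      have := Real.log_le_sub_one_of_pos (x := p b * q c / r b c) (by positivity)
      rw [Real.log_div (by positivity) h.ne', Real.log_mul pp.ne' qp.ne'] at this
      have h3 := mul_le_mul_of_nonneg_left this h.le
      have : r b c * (p b * q c / r b c - 1) = p b * q c - r b c := by field_simp
      unfold negMulLog
      nlinarith
  calc _ ≤ ∑ b, ∑ c, (-(r b c * Real.log (p b)) + -(r b c * Real.log (q c)) + (p b * q c - r b c)) :=
        Finset.sum_le_sum fun b _ => Finset.sum_le_sum fun c _ => key b c
    _ = _ := by
        simp only [Finset.sum_add_distrib, Finset.sum_sub_distrib]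
        rw [h1]
        simp only [← Finset.mul_sum, hq, mul_one, hp]
        rw [e1, e2]; ring

end
end MMDP

namespace MMDP
set_option linter.unusedSectionVars false
open Real (negMulLog)
section
variable {X : Type*} [MetricSpace X] [MeasurableSpace X] [BorelSpace X]

lemma Ach.mono {T : X → X} {ε θ : ℝ} {μ : Measure X} {W : Finset ℕ} {v v' : ℝ}
    (h : Ach T ε θ μ W v) (hv : v ≤ v') : Ach T ε θ μ W v' := by
  obtain ⟨β, i, φ, L, hk, hJ⟩ := h
  exact ⟨β, i, φ, L, hk, hJ.trans hv⟩

lemma Ach.default [Nonempty X] {T : X → X} (hT : Continuous T) {ε θ : ℝ} (hθ : 0 ≤ θ) (μ : Measure X)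
    [IsProbabilityMeasure μ] (W : Finset ℕ) : Ach T ε θ μ W (θ * W.card) := by
  refine ⟨Unit, inferInstance, fun _ _ => 1, fun _ _ => Classical.arbitrary X,
    ⟨fun _ => measurable_const, fun _ _ => zero_le_one, fun _ => by simp⟩, ?_⟩
  simp only [J, integral_const, probReal_univ, one_smul, Real.negMulLog_one, one_mul,
    Finset.univ_unique, Finset.sum_singleton, sub_self, zero_add]
  refine mul_le_mul_of_nonneg_left ?_ hθ
  have := integral_mono (μ := μ) (f := cost T ε W (fun _ => Classical.arbitrary X))
    (g := fun _ => (W.card : ℝ))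
    (integrable_of_bdd (continuous_cost hT ε W _).measurable (cost_nonneg _ _ _ _) (cost_le _ _ _ _))
    (integrable_const _) (cost_le _ _ _ _)
  simpa using this

lemma Ach.shift {T : X → X} (hT : Continuous T) {ε θ : ℝ} {μ : Measure X} {W : Finset ℕ} {v : ℝ}
    (i : ℕ) (h : Ach T ε θ (μ.map (T^[i])) W v) :
    Ach T ε θ μ (W.map (addRightEmbedding i)) v := by
  obtain ⟨β, _, φ, L, hk, hJ⟩ := h
  have hm : Measurable (T^[i]) := (hT.iterate i).measurable
  refine ⟨β, inferInstance, fun b x => φ b (T^[i] x), fun b k => L b (k - i),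
    ⟨fun b => (hk.meas b).comp hm, fun b x => hk.nonneg b _, fun x => hk.sum_one _⟩,
    le_of_eq_of_le ?_ hJ⟩
  unfold J
  refine Finset.sum_congr rfl fun b _ => ?_
  rw [integral_map hm.aemeasurable (hk.meas b).aestronglyMeasurable,
    integral_map hm.aemeasurable (hk.meas_nml b).aestronglyMeasurable,
    integral_map (f := fun x => φ b x * cost T ε W (L b) x) hm.aemeasurable
      ((hk.meas b).mul (continuous_cost hT ε W (L b)).measurable).aestronglyMeasurable]
  have : ∀ x, cost T ε (W.map (addRightEmbedding i)) (fun k => L b (k - i)) x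
      = cost T ε W (L b) (T^[i] x) := by
    intro x
    simp [cost, Finset.sum_map, Function.iterate_add_apply]
  simp only [this]

lemma Ach.cat {T : X → X} (hT : Continuous T) {ε θ : ℝ} {μ : Measure X}
    [IsProbabilityMeasure μ] {W₁ W₂ : Finset ℕ} {v₁ v₂ : ℝ} (hd : Disjoint W₁ W₂)
    (h₁ : Ach T ε θ μ W₁ v₁) (h₂ : Ach T ε θ μ W₂ v₂) :
    Ach T ε θ μ (W₁ ∪ W₂) (v₁ + v₂) := by
  obtain ⟨β, _, φ, L, hk, hJ⟩ := h₁
  obtain ⟨γ, _, ψ, M, hl, hJ'⟩ := h₂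
  have hker : IsKer (fun (p : β × γ) x => φ p.1 x * ψ p.2 x) := by
    refine ⟨fun p => (hk.meas _).mul (hl.meas _), fun p x => mul_nonneg (hk.nonneg _ _) (hl.nonneg _ _),
      fun x => ?_⟩
    rw [Fintype.sum_prod_type]
    simp only [← Finset.mul_sum, hl.sum_one, mul_one, hk.sum_one]
  refine ⟨β × γ, inferInstance, fun p x => φ p.1 x * ψ p.2 x,
    fun p k => if k ∈ W₁ then L p.1 k else M p.2 k, hker, le_trans ?_ (add_le_add hJ hJ')⟩
  have hcost : ∀ (p : β × γ) x, cost T ε (W₁ ∪ W₂) (fun k => if k ∈ W₁ then L p.1 k else M p.2 k) x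
      = cost T ε W₁ (L p.1) x + cost T ε W₂ (M p.2) x := by
    intro p x
    unfold cost
    rw [Finset.sum_union hd]
    congr 1
    · exact Finset.sum_congr rfl fun k hk => by simp only [if_pos hk]
    · exact Finset.sum_congr rfl fun k hk => by simp only [if_neg (Finset.disjoint_right.1 hd hk)]
  have i1 : ∀ (b : β) (c : γ), Integrable (fun x => φ b x * ψ c x) μ := fun b c => hker.int μ (b, c)
  have s1 : ∀ b, ∑ c, ∫ x, φ b x * ψ c x ∂μ = ∫ x, φ b x ∂μ := by
    intro b
    rw [← integral_finsetSum _ fun c _ => i1 b c]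
    simp only [← Finset.mul_sum, hl.sum_one, mul_one]
  have s2 : ∀ c, ∑ b, ∫ x, φ b x * ψ c x ∂μ = ∫ x, ψ c x ∂μ := by
    intro c
    rw [← integral_finsetSum _ fun b _ => i1 b c]
    simp only [← Finset.sum_mul, hk.sum_one, one_mul]
  have a1 := entropy_subadd (fun b c => ∫ x, φ b x * ψ c x ∂μ)
    (fun b c => integral_nonneg fun x => hker.nonneg (b, c) x)
    (by simp only [s1, hk.sum_integral])
  simp only [s1, s2] at a1
  have i2 : ∀ (b : β) (c : γ), Integrable (fun x => negMulLog (φ b x * ψ c x)) μ :=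
    fun b c => hker.int_nml μ (b, c)
  have a2 : ∑ b, ∑ c, ∫ x, negMulLog (φ b x * ψ c x) ∂μ
      = ∑ b, ∫ x, negMulLog (φ b x) ∂μ + ∑ c, ∫ x, negMulLog (ψ c x) ∂μ := by
    rw [← integral_finsetSum _ fun b _ => hk.int_nml μ b,
      ← integral_finsetSum _ fun b _ => hl.int_nml μ b, ← integral_add
      (integrable_finsetSum _ fun b _ => hk.int_nml μ b) (integrable_finsetSum _ fun b _ => hl.int_nml μ b)]
    simp only [← integral_finsetSum _ fun c _ => i2 _ c]
    rw [← integral_finsetSum _ fun b _ => integrable_finsetSum _ fun c _ => i2 b c]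
    congr 1; ext x
    simp only [Real.negMulLog_mul, Finset.sum_add_distrib, ← Finset.sum_mul, ← Finset.mul_sum,
      hl.sum_one, hk.sum_one, one_mul]
  have i3 := fun b => hk.int_cost μ hT ε W₁ (L b) b
  have i4 := fun b => hl.int_cost μ hT ε W₂ (M b) b
  have i5 : ∀ (b : β) (c : γ), Integrable (fun x => φ b x * ψ c x * (cost T ε W₁ (L b) x + cost T ε W₂ (M c) x)) μ := by
    intro b c
    have := hker.int_cost μ hT ε (W₁ ∪ W₂) (fun k => if k ∈ W₁ then L b k else M c k) (b, c)
    simp only [hcost (b, c)] at this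
    exact this
  have a3 : ∑ b, ∑ c, ∫ x, φ b x * ψ c x * (cost T ε W₁ (L b) x + cost T ε W₂ (M c) x) ∂μ
      = ∑ b, ∫ x, φ b x * cost T ε W₁ (L b) x ∂μ + ∑ c, ∫ x, ψ c x * cost T ε W₂ (M c) x ∂μ := by
    rw [← integral_finsetSum _ fun b _ => i3 b,
      ← integral_finsetSum _ fun b _ => i4 b, ← integral_add
      (integrable_finsetSum _ fun b _ => i3 b) (integrable_finsetSum _ fun b _ => i4 b)]
    simp only [← integral_finsetSum _ fun c _ => i5 _ c]
    rw [← integral_finsetSum _ fun b _ => integrable_finsetSum _ fun c _ => i5 b c]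
    congr 1; ext x
    have : ∀ b c, φ b x * ψ c x * (cost T ε W₁ (L b) x + cost T ε W₂ (M c) x)
      = ψ c x * (φ b x * cost T ε W₁ (L b) x) + φ b x * (ψ c x * cost T ε W₂ (M c) x) := by
      intros; ring
    simp only [this, Finset.sum_add_distrib, ← Finset.sum_mul, ← Finset.mul_sum,
      hl.sum_one, hk.sum_one, one_mul]
  simp only [J, Fintype.sum_prod_type, hcost, Finset.sum_add_distrib, Finset.sum_sub_distrib,
    ← Finset.mul_sum]
  rw [a2, a3]
  linarith

lemma integral_mix {μ μ₁ μ₂ : Measure X} [IsProbabilityMeasure μ₁] [IsProbabilityMeasure μ₂]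
    {l : ℝ} (hl : 0 ≤ l) (hl1 : l ≤ 1)
    (hμ : μ = ENNReal.ofReal l • μ₁ + ENNReal.ofReal (1 - l) • μ₂) {f : X → ℝ}
    (h1 : Integrable f μ₁) (h2 : Integrable f μ₂) :
    ∫ x, f x ∂μ = l * ∫ x, f x ∂μ₁ + (1 - l) * ∫ x, f x ∂μ₂ := by
  rw [hμ, integral_add_measure (h1.smul_measure ENNReal.ofReal_ne_top)
    (h2.smul_measure ENNReal.ofReal_ne_top), integral_smul_measure, integral_smul_measure,
    ENNReal.toReal_ofReal hl, ENNReal.toReal_ofReal (by linarith)]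
  rfl

lemma integral_mix_ind {μ μ₁ μ₂ : Measure X} [IsProbabilityMeasure μ₁] [IsProbabilityMeasure μ₂]
    {l : ℝ} (hl : 0 ≤ l) (hl1 : l ≤ 1)
    (hμ : μ = ENNReal.ofReal l • μ₁ + ENNReal.ofReal (1 - l) • μ₂) {A : Set X}
    (hA : MeasurableSet A) (hA1 : μ₁ Aᶜ = 0) (hA2 : μ₂ A = 0) {f : X → ℝ}
    (h1 : Integrable f μ₁) (h2 : Integrable f μ₂) :
    ∫ x, A.indicator f x ∂μ = l * ∫ x, f x ∂μ₁ := by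
  rw [integral_mix hl hl1 hμ (h1.indicator hA) (h2.indicator hA), integral_indicator hA,
    integral_indicator hA, Measure.restrict_eq_zero.2 hA2, integral_zero_measure,
    Measure.restrict_eq_self_of_ae_mem (mem_ae_iff.2 hA1)]
  ring

lemma sum_nml_scale {β : Type} [Fintype β] (p : β → ℝ) (hp : ∑ b, p b = 1) (l : ℝ) :
    ∑ b, negMulLog (l * p b) = negMulLog l + l * ∑ b, negMulLog (p b) := by
  simp only [Real.negMulLog_mul, Finset.sum_add_distrib, ← Finset.sum_mul, ← Finset.mul_sum, hp,
    one_mul]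

lemma Ach.mix {T : X → X} (hT : Continuous T) {ε θ : ℝ} {μ μ₁ μ₂ : Measure X}
    [IsProbabilityMeasure μ₁] [IsProbabilityMeasure μ₂]
    {l : ℝ} (hl : 0 ≤ l) (hl1 : l ≤ 1)
    (hμ : μ = ENNReal.ofReal l • μ₁ + ENNReal.ofReal (1 - l) • μ₂) {A : Set X}
    (hA : MeasurableSet A) (hA1 : μ₁ Aᶜ = 0) (hA2 : μ₂ A = 0)
    {W : Finset ℕ} {v₁ v₂ : ℝ}
    (h₁ : Ach T ε θ μ₁ W v₁) (h₂ : Ach T ε θ μ₂ W v₂) :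
    Ach T ε θ μ W (l * v₁ + (1 - l) * v₂ + 2) := by
  obtain ⟨β, _, φ, L, hk, hJ⟩ := h₁
  obtain ⟨γ, _, ψ, M, hk', hJ'⟩ := h₂
  have hμ' : μ = ENNReal.ofReal (1 - l) • μ₂ + ENNReal.ofReal (1 - (1 - l)) • μ₁ := by
    rw [hμ, add_comm]; congr 3; ring
  have hl' : 0 ≤ 1 - l := by linarith
  have hl1' : 1 - l ≤ 1 := by linarith
  have hA1' : μ₁ Aᶜ = 0 := hA1
  have hA2' : μ₂ Aᶜᶜ = 0 := by rwa [compl_compl]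
  let Φ : β ⊕ γ → X → ℝ := Sum.elim (fun b => A.indicator (φ b)) (fun c => Aᶜ.indicator (ψ c))
  let N : β ⊕ γ → ℕ → X := Sum.elim L M
  refine ⟨β ⊕ γ, inferInstance, Φ, N, ⟨?_, ?_, ?_⟩, ?_⟩
  · rintro (b | c)
    · exact (hk.meas b).indicator hA
    · exact (hk'.meas c).indicator hA.compl
  · rintro (b | c) x
    · exact indicator_nonneg (fun x _ => hk.nonneg b x) x
    · exact indicator_nonneg (fun x _ => hk'.nonneg c x) x
  · intro x
    rw [Fintype.sum_sum_type]
    by_cases hx : x ∈ A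
    · simp [Φ, hx, hk.sum_one]
    · simp [Φ, hx, hk'.sum_one]
  · have e0 : ∀ (s : Set X) (f : X → ℝ) x, negMulLog (s.indicator f x)
        = s.indicator (fun x => negMulLog (f x)) x := by
      intro s f x; by_cases hx : x ∈ s <;> simp [hx]
    have e1 : ∀ (s : Set X) (f g : X → ℝ) x, s.indicator f x * g x
        = s.indicator (fun x => f x * g x) x := by
      intro s f g x; by_cases hx : x ∈ s <;> simp [hx]
    have k1 := fun b => integral_mix_ind hl hl1 hμ hA hA1 hA2 (hk.int μ₁ b) (hk.int μ₂ b)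
    have k2 := fun b => integral_mix_ind hl hl1 hμ hA hA1 hA2 (hk.int_nml μ₁ b) (hk.int_nml μ₂ b)
    have k3 := fun b => integral_mix_ind hl hl1 hμ hA hA1 hA2 (hk.int_cost μ₁ hT ε W (L b) b)
      (hk.int_cost μ₂ hT ε W (L b) b)
    have k4 := fun b => integral_mix_ind hl' hl1' hμ' hA.compl hA2' hA1' (hk'.int μ₂ b) (hk'.int μ₁ b)
    have k5 := fun b => integral_mix_ind hl' hl1' hμ' hA.compl hA2' hA1' (hk'.int_nml μ₂ b) (hk'.int_nml μ₁ b)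
    have k6 := fun b => integral_mix_ind hl' hl1' hμ' hA.compl hA2' hA1' (hk'.int_cost μ₂ hT ε W (M b) b)
      (hk'.int_cost μ₁ hT ε W (M b) b)
    have n1 := negMulLog_le_one hl hl1
    have n2 := negMulLog_le_one hl' hl1'
    have m1 := mul_le_mul_of_nonneg_left hJ hl
    have m2 := mul_le_mul_of_nonneg_left hJ' hl'
    have : J T ε θ μ W Φ N = l * J T ε θ μ₁ W φ L + (1 - l) * J T ε θ μ₂ W ψ M
        + (negMulLog l + negMulLog (1 - l)) := by
      simp only [J, Fintype.sum_sum_type, Φ, N, Sum.elim_inl, Sum.elim_inr, e0, e1, k1, k2, k3, k4, k5, k6,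
        Finset.sum_add_distrib, Finset.sum_sub_distrib, ← Finset.mul_sum,
        sum_nml_scale _ (hk.sum_integral μ₁), sum_nml_scale _ (hk'.sum_integral μ₂)]
      ring
    linarith

end
end MMDP

namespace MMDP
set_option linter.unusedSectionVars false
open Real (negMulLog)
section
variable {X : Type*} [MetricSpace X] [MeasurableSpace X] [BorelSpace X]

lemma exists_cont_seq {β : Type} [Fintype β] {φ : β → X → ℝ} (h : IsKer φ) (μ : Measure X)
    [IsProbabilityMeasure μ] :
    ∃ g : ℕ → X → β → ℝ, (∀ j, Continuous (g j)) ∧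
      ∀ᵐ x ∂μ, Tendsto (fun j => g j x) atTop (𝓝 (fun b => φ b x)) := by
  have hm : Measurable (fun x b => φ b x) := measurable_pi_lambda _ fun b => h.meas b
  have hF : MemLp (fun x b => φ b x) 1 μ := by
    refine MemLp.of_bound hm.aestronglyMeasurable 1 (Eventually.of_forall fun x => ?_)
    rw [pi_norm_le_iff_of_nonneg zero_le_one]
    intro b
    rw [Real.norm_eq_abs, abs_of_nonneg (h.nonneg b x)]
    exact h.le_one b x
  have : ∀ j : ℕ, ∃ g : BoundedContinuousFunction X (β → ℝ),
      eLpNorm ((fun x b => φ b x) - ⇑g) 1 μ ≤ ((j : ℝ≥0∞) + 1)⁻¹ := by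
    intro j
    obtain ⟨g, hg, -⟩ := hF.exists_boundedContinuous_eLpNorm_sub_le ENNReal.one_ne_top
      (ε := ((j : ℝ≥0∞) + 1)⁻¹) (by simp)
    exact ⟨g, hg⟩
  choose g hg using this
  have ht : Tendsto (fun j => eLpNorm (⇑(g j) - (fun x b => φ b x)) 1 μ) atTop (𝓝 0) := by
    have : Tendsto (fun j : ℕ => ((j : ℝ≥0∞) + 1)⁻¹) atTop (𝓝 0) := by
      have := (ENNReal.tendsto_inv_nat_nhds_zero).comp (tendsto_add_atTop_nat 1)
      simpa [Function.comp_def] using this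
    refine tendsto_of_tendsto_of_tendsto_of_le_of_le tendsto_const_nhds this (fun _ => zero_le) ?_
    intro j
    dsimp only
    rw [eLpNorm_sub_comm]
    exact hg j
  obtain ⟨ns, -, hns⟩ := (tendstoInMeasure_of_tendsto_eLpNorm one_ne_zero
    (fun j => (g j).continuous.aestronglyMeasurable) hm.aestronglyMeasurable ht).exists_seq_tendsto_ae
  exact ⟨fun j => g (ns j), fun j => (g (ns j)).continuous, hns⟩

lemma exists_cont_ker_seq {β : Type} [Fintype β] {φ : β → X → ℝ} (h : IsKer φ) (μ : Measure X)
    [IsProbabilityMeasure μ] :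
    ∃ g : ℕ → β → X → ℝ, (∀ j, IsKer (g j)) ∧ (∀ j b, Continuous (g j b)) ∧
      ∀ᵐ x ∂μ, ∀ b, Tendsto (fun j => g j b x) atTop (𝓝 (φ b x)) := by
  obtain ⟨f, hf, hlim⟩ := exists_cont_seq h μ
  let G : ℕ → β → X → ℝ := fun j b x => |f j x b| + 1 / ((j : ℝ) + 1)
  have hGc : ∀ j b, Continuous (G j b) := fun j b =>
    (((continuous_apply b).comp (hf j)).abs).add continuous_const
  have hGpos : ∀ j b x, 0 < G j b x := fun j b x => by
    have : (0 : ℝ) < 1 / ((j : ℝ) + 1) := by positivity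
    have := abs_nonneg (f j x b)
    simp only [G]; linarith
  have hSpos : ∀ j x, 0 < ∑ b, G j b x := by
    intro j x
    have : Nonempty β := by
      by_contra hβ
      have hβ' := not_nonempty_iff.1 hβ
      have := h.sum_one x
      simp at this
    exact Finset.sum_pos (fun b _ => hGpos j b x) Finset.univ_nonempty
  have hc : ∀ j b, Continuous (fun x => G j b x / ∑ b, G j b x) := fun j b =>
    (hGc j b).div (continuous_finsetSum _ fun b _ => hGc j b) fun x => (hSpos j x).ne'
  refine ⟨fun j b x => G j b x / ∑ b, G j b x, fun j => ⟨fun b => (hc j b).measurable,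
    fun b x => (div_pos (hGpos j b x) (hSpos j x)).le, fun x => ?_⟩, hc, ?_⟩
  · rw [← Finset.sum_div, div_self (hSpos j x).ne']
  · filter_upwards [hlim] with x hx b
    have h1 : ∀ b, Tendsto (fun j => G j b x) atTop (𝓝 (φ b x)) := by
      intro b
      have := ((tendsto_pi_nhds.1 hx b).abs).add (tendsto_one_div_add_atTop_nhds_zero_nat (𝕜 := ℝ))
      rwa [abs_of_nonneg (h.nonneg b x), add_zero] at this
    have h2 := tendsto_finsetSum Finset.univ fun b _ => h1 b
    rw [h.sum_one x] at h2
    have h3 := (h1 b).div h2 one_ne_zero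
    rw [div_one] at h3
    exact h3

lemma exists_cont_ker {T : X → X} (hT : Continuous T) (ε θ : ℝ) (W : Finset ℕ)
    {β : Type} [Fintype β] {φ : β → X → ℝ} (h : IsKer φ) (L : β → ℕ → X) (μ : Measure X)
    [IsProbabilityMeasure μ] {v : ℝ} (hv : J T ε θ μ W φ L < v) :
    ∃ g : β → X → ℝ, IsKer g ∧ (∀ b, Continuous (g b)) ∧ J T ε θ μ W g L < v := by
  obtain ⟨g, hk, hc, hlim⟩ := exists_cont_ker_seq h μ
  have hlim' := ae_all_iff.1 hlim
  have : Tendsto (fun j => J T ε θ μ W (g j) L) atTop (𝓝 (J T ε θ μ W φ L)) := by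
    unfold J
    refine tendsto_finsetSum _ fun b _ => ?_
    have t1 : Tendsto (fun j => ∫ x, g j b x ∂μ) atTop (𝓝 (∫ x, φ b x ∂μ)) := by
      refine tendsto_integral_of_dominated_convergence (fun _ => 1)
        (fun j => (hc j b).aestronglyMeasurable) (integrable_const _) (fun j => ?_) (hlim' b)
      refine Eventually.of_forall fun x => ?_
      rw [Real.norm_eq_abs, abs_of_nonneg ((hk j).nonneg b x)]; exact (hk j).le_one b x
    have t2 : Tendsto (fun j => ∫ x, negMulLog (g j b x) ∂μ) atTop (𝓝 (∫ x, negMulLog (φ b x) ∂μ)) := by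
      refine tendsto_integral_of_dominated_convergence (fun _ => 1)
        (fun j => ((hk j).meas_nml b).aestronglyMeasurable) (integrable_const _) (fun j => ?_) ?_
      · refine Eventually.of_forall fun x => ?_
        rw [Real.norm_eq_abs, abs_of_nonneg (Real.negMulLog_nonneg ((hk j).nonneg b x) ((hk j).le_one b x))]
        exact negMulLog_le_one ((hk j).nonneg b x) ((hk j).le_one b x)
      · filter_upwards [hlim' b] with x hx
        exact (Real.continuous_negMulLog.tendsto _).comp hx
    have t3 : Tendsto (fun j => ∫ x, g j b x * cost T ε W (L b) x ∂μ) atTop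
        (𝓝 (∫ x, φ b x * cost T ε W (L b) x ∂μ)) := by
      refine tendsto_integral_of_dominated_convergence (fun _ => (W.card : ℝ))
        (fun j => ((hc j b).mul (continuous_cost hT ε W (L b))).aestronglyMeasurable)
        (integrable_const _) (fun j => ?_) ?_
      · refine Eventually.of_forall fun x => ?_
        rw [Real.norm_eq_abs, abs_of_nonneg (mul_nonneg ((hk j).nonneg b x) (cost_nonneg _ _ _ _ _))]
        calc _ ≤ 1 * (W.card : ℝ) := mul_le_mul ((hk j).le_one b x) (cost_le _ _ _ _ _)
              (cost_nonneg _ _ _ _ _) zero_le_one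
          _ = _ := one_mul _
      · filter_upwards [hlim' b] with x hx
        exact hx.mul tendsto_const_nhds
    exact (((Real.continuous_negMulLog.tendsto _).comp t1).sub t2).add (t3.const_mul θ)
  obtain ⟨j, hj⟩ := (this.eventually (gt_mem_nhds hv)).exists
  exact ⟨g j, hk j, hc j, hj⟩

lemma continuous_J [CompactSpace X] {T : X → X} (hT : Continuous T) (ε θ : ℝ) (W : Finset ℕ)
    {β : Type} [Fintype β] {φ : β → X → ℝ} (hc : ∀ b, Continuous (φ b)) (L : β → ℕ → X) :
    Continuous (fun μ : ProbabilityMeasure X => J T ε θ (μ : Measure X) W φ L) := by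
  have key : ∀ f : X → ℝ, Continuous f →
      Continuous (fun μ : ProbabilityMeasure X => ∫ x, f x ∂(μ : Measure X)) := fun f hf =>
    ProbabilityMeasure.continuous_integral_continuousMap (⟨f, hf⟩ : C(X, ℝ))
  unfold J
  refine continuous_finsetSum _ fun b _ => ?_
  refine ((Real.continuous_negMulLog.comp (key _ (hc b))).sub
    (key _ (Real.continuous_negMulLog.comp (hc b)))).add (continuous_const.mul
      (key _ ((hc b).mul (continuous_cost hT ε W (L b)))))

/-- Achievability is an open condition. -/
lemma Ach.eventually [CompactSpace X] {T : X → X} (hT : Continuous T) {ε θ : ℝ} {W : Finset ℕ}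
    {μ : ProbabilityMeasure X} {v v' : ℝ} (h : Ach T ε θ (μ : Measure X) W v) (hv : v < v') :
    ∃ (β : Type) (_ : Fintype β) (φ : β → X → ℝ) (L : β → ℕ → X), IsKer φ ∧
      ∀ᶠ ν : ProbabilityMeasure X in 𝓝 μ, J T ε θ (ν : Measure X) W φ L < v' := by
  obtain ⟨β, _, φ, L, hk, hJ⟩ := h
  obtain ⟨g, hg, hgc, hgJ⟩ := exists_cont_ker hT ε θ W hk L (μ : Measure X) (hJ.trans_lt hv)
  exact ⟨β, inferInstance, g, L, hg, ((continuous_J hT ε θ W hgc L).tendsto μ).eventually (gt_mem_nhds hgJ)⟩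

end
end MMDP

namespace MMDP
set_option linter.unusedSectionVars false
open Real (negMulLog)
section
variable {X : Type*} [MetricSpace X]

lemma sum_exp_cost_le {T : X → X} {ε θ : ℝ} (hε : 0 < ε) (hθ : 0 ≤ θ) {n K : ℕ} {E : Finset X}
    (c : X → Fin K) (hc : ∀ x y, c x = c y → dist x y < 6 * ε)
    (hE : ∀ x ∈ E, ∀ y ∈ E, x ≠ y → ∃ k < n, 6 * ε ≤ dist (T^[k] x) (T^[k] y)) (l : ℕ → X) :
    ∑ x ∈ E, Real.exp (-(θ * cost T ε (Finset.range n) l x))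
      ≤ (1 + K * Real.exp (-θ)) ^ n := by
  classical
  let w : X → Fin n → Option (Fin K) := fun x k =>
    if dist (T^[(k : ℕ)] x) (l k) < 3 * ε then none else some (c (T^[(k : ℕ)] x))
  let g : Option (Fin K) → ℝ := fun o => o.elim 1 (fun _ => Real.exp (-θ))
  have hg0 : ∀ o, 0 ≤ g o := by rintro (_ | _) <;> simp [g, Real.exp_nonneg]
  have hinj : Set.InjOn w E := by
    intro x hx y hy hxy
    by_contra hne
    obtain ⟨k, hk, hd⟩ := hE x hx y hy hne
    have := congrFun hxy ⟨k, hk⟩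
    simp only [w] at this
    split_ifs at this with h1 h2 h2
    · have := dist_triangle_right (T^[k] x) (T^[k] y) (l k)
      linarith
    · have := hc _ _ (Option.some.inj this)
      linarith
  have hle : ∀ x, Real.exp (-(θ * cost T ε (Finset.range n) l x)) ≤ ∏ k : Fin n, g (w x k) := by
    intro x
    unfold cost
    rw [Finset.sum_range, Finset.mul_sum, ← Finset.sum_neg_distrib, Real.exp_sum]
    refine Finset.prod_le_prod (fun _ _ => (Real.exp_pos _).le) fun k _ => ?_
    simp only [w]
    split_ifs with h
    · simp only [g, Option.elim]
      rw [Real.exp_le_one_iff]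
      have := mul_nonneg hθ (chi_nonneg ε (dist (T^[(k : ℕ)] x) (l k)))
      linarith
    · simp only [g, Option.elim]
      rw [chi_eq_one hε (not_lt.1 h), mul_one]
  calc _ ≤ ∑ x ∈ E, ∏ k : Fin n, g (w x k) := Finset.sum_le_sum fun x _ => hle x
    _ = ∑ u ∈ E.image w, ∏ k : Fin n, g (u k) := (Finset.sum_image (f := fun u => ∏ k : Fin n, g (u k)) hinj).symm
    _ ≤ ∑ u : Fin n → Option (Fin K), ∏ k : Fin n, g (u k) :=
        Finset.sum_le_sum_of_subset_of_nonneg (Finset.subset_univ _)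
          fun u _ _ => Finset.prod_nonneg fun k _ => hg0 _
    _ = (∑ o, g o) ^ n := by
        rw [Fintype.sum_pow]
    _ = _ := by
        rw [Fintype.sum_option]; simp [g]

lemma gibbs {t u : ℝ} (ht : 0 ≤ t) (hu : 0 < u) : t - u ≤ t * Real.log t - t * Real.log u := by
  rcases ht.eq_or_lt with rfl | ht
  · simp; exact hu.le
  · have := Real.log_le_sub_one_of_pos (div_pos hu ht)
    rw [Real.log_div hu.ne' ht.ne'] at this
    have h3 := mul_le_mul_of_nonneg_left this ht.le
    have : t * (u / t - 1) = u - t := by field_simp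
    nlinarith

variable [MeasurableSpace X] [BorelSpace X]

lemma fano {T : X → X} {ε θ : ℝ} (hε : 0 < ε) (hθ : 0 ≤ θ) {n K : ℕ} {E : Finset X} (hEn : E.Nonempty)
    (c : X → Fin K) (hc : ∀ x y, c x = c y → dist x y < 6 * ε)
    (hE : ∀ x ∈ E, ∀ y ∈ E, x ≠ y → ∃ k < n, 6 * ε ≤ dist (T^[k] x) (T^[k] y))
    {μ : Measure X} [IsProbabilityMeasure μ]
    (hμ : ∀ f : X → ℝ, Measurable f → ∫ x, f x ∂μ = (E.card : ℝ)⁻¹ * ∑ x ∈ E, f x)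
    (hT : Continuous T)
    {v : ℝ} (h : Ach T ε θ μ (Finset.range n) v) :
    Real.log E.card ≤ v + n * Real.log (1 + K * Real.exp (-θ)) := by
  obtain ⟨β, _, φ, L, hk, hJ⟩ := h
  obtain ⟨N, hN⟩ : ∃ N : ℝ, N = ((E.card : ℕ) : ℝ) := ⟨_, rfl⟩
  simp only [← hN] at hμ ⊢
  have hNpos : 0 < N := by rw [hN]; exact_mod_cast hEn.card_pos
  obtain ⟨Z, hZ⟩ : ∃ Z : ℝ, Z = (1 + K * Real.exp (-θ)) ^ n := ⟨_, rfl⟩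
  have hZpos : 0 < Z := by rw [hZ]; positivity
  have hlogZ : n * Real.log (1 + K * Real.exp (-θ)) = Real.log Z := by rw [hZ, Real.log_pow]
  rw [hlogZ]
  have key : ∀ b, (∫ x, φ b x ∂μ) * (Real.log N - Real.log Z) ≤
      negMulLog (∫ x, φ b x ∂μ) - ∫ x, negMulLog (φ b x) ∂μ
        + θ * ∫ x, φ b x * cost T ε (Finset.range n) (L b) x ∂μ := by
    intro b
    obtain ⟨p, hp⟩ : ∃ p, p = ∫ x, φ b x ∂μ := ⟨_, rfl⟩
    rw [← hp]
    have hp0 : 0 ≤ p := by rw [hp]; exact integral_nonneg fun x => hk.nonneg b x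
    have e1 : p = N⁻¹ * ∑ x ∈ E, φ b x := hp.trans (hμ _ (hk.meas b))
    have e1' : ∑ x ∈ E, φ b x = N * p := by rw [e1]; field_simp
    rw [hμ _ (hk.meas_nml b), hμ (fun x => φ b x * cost T ε (Finset.range n) (L b) x)
      ((hk.meas b).mul (continuous_cost hT ε _ (L b)).measurable)]
    rcases hp0.eq_or_lt with h0 | h0
    · have hz : ∀ x ∈ E, φ b x = 0 := by
        rw [← h0, mul_zero] at e1'
        exact (Finset.sum_eq_zero_iff_of_nonneg fun x _ => hk.nonneg b x).1 e1'
      have z1 : ∑ x ∈ E, negMulLog (φ b x) = 0 :=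
        Finset.sum_eq_zero fun x hx => by rw [hz x hx, Real.negMulLog_zero]
      have z2 : ∑ x ∈ E, φ b x * cost T ε (Finset.range n) (L b) x = 0 :=
        Finset.sum_eq_zero fun x hx => by rw [hz x hx, zero_mul]
      rw [← h0, z1, z2]
      simp
    · obtain ⟨C, hC⟩ : ∃ C : X → ℝ, C = fun x => cost T ε (Finset.range n) (L b) x := ⟨_, rfl⟩
      have hC' : ∀ x, cost T ε (Finset.range n) (L b) x = C x := fun x => by rw [hC]
      simp only [hC']
      have hs := sum_exp_cost_le (T := T) hε hθ c hc hE (L b)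
      rw [← hZ] at hs
      simp only [hC'] at hs
      have g1 : ∑ x ∈ E, (φ b x - N * p * (Real.exp (-(θ * C x)) / Z)) ≤
          ∑ x ∈ E, (φ b x * Real.log (φ b x) - φ b x * Real.log (N * p * (Real.exp (-(θ * C x)) / Z))) :=
        Finset.sum_le_sum fun x _ => gibbs (hk.nonneg b x) (by positivity)
      have g2 : 0 ≤ ∑ x ∈ E, (φ b x - N * p * (Real.exp (-(θ * C x)) / Z)) := by
        rw [Finset.sum_sub_distrib, ← Finset.mul_sum, ← Finset.sum_div, e1', sub_nonneg]
        have : (∑ x ∈ E, Real.exp (-(θ * C x))) / Z ≤ 1 := (div_le_one hZpos).2 hs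
        calc N * p * ((∑ x ∈ E, Real.exp (-(θ * C x))) / Z) ≤ N * p * 1 :=
              mul_le_mul_of_nonneg_left this (by positivity)
          _ = _ := mul_one _
      have g3 : ∀ x, Real.log (N * p * (Real.exp (-(θ * C x)) / Z))
          = Real.log N + Real.log p - θ * C x - Real.log Z := by
        intro x
        rw [Real.log_mul (by positivity) (by positivity), Real.log_mul hNpos.ne' h0.ne',
          Real.log_div (Real.exp_ne_zero _) hZpos.ne', Real.log_exp]
        ring
      have g4 : ∑ x ∈ E, (φ b x * Real.log (φ b x) - φ b x * Real.log (N * p * (Real.exp (-(θ * C x)) / Z)))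
          = - ∑ x ∈ E, negMulLog (φ b x) - (N * p) * (Real.log N + Real.log p - Real.log Z)
            + θ * ∑ x ∈ E, φ b x * C x := by
        simp only [g3]
        rw [← e1', Finset.sum_mul, Finset.mul_sum, ← Finset.sum_neg_distrib, ← Finset.sum_sub_distrib,
          ← Finset.sum_add_distrib]
        refine Finset.sum_congr rfl fun x _ => ?_
        rw [negMulLog]; ring
      have g5 := g2.trans g1
      rw [g4] at g5
      have g6 := mul_nonneg (inv_nonneg.2 hNpos.le) g5
      have g7 : N⁻¹ * (- ∑ x ∈ E, negMulLog (φ b x) - (N * p) * (Real.log N + Real.log p - Real.log Z)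
            + θ * ∑ x ∈ E, φ b x * C x) = -(N⁻¹ * ∑ x ∈ E, negMulLog (φ b x))
            - p * (Real.log N + Real.log p - Real.log Z) + θ * (N⁻¹ * ∑ x ∈ E, φ b x * C x) := by
        field_simp
      rw [g7] at g6
      have : negMulLog p = - (p * Real.log p) := by simp [negMulLog]
      rw [this]
      linarith
  have := Finset.sum_le_sum fun b (_ : b ∈ Finset.univ) => key b
  rw [← Finset.sum_mul, hk.sum_integral, one_mul] at this
  have h2 : Real.log N - Real.log Z ≤ v := this.trans hJ
  linarith

end
end MMDP

namespace MMDP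
set_option linter.unusedSectionVars false
open Real (negMulLog)
section
variable {X : Type*} [MetricSpace X] [CompactSpace X] [MeasurableSpace X] [BorelSpace X]

lemma exists_color {T : X → X} (hT : Continuous T) (m : ℕ) {r : ℝ} (hr : 0 < r) :
    ∃ (K : ℕ) (c : X → Fin K), Measurable c ∧
      ∀ x y, c x = c y → ∀ k < m, dist (T^[k] x) (T^[k] y) < r := by
  classical
  obtain ⟨t, -, ht, hcov⟩ := finite_cover_balls_of_compact (isCompact_univ (X := X)) (half_pos hr)
  have : Finite t := ht
  have := Fintype.ofFinite t
  let c0 : X → Fin m → t → Bool := fun x k i => decide (T^[(k : ℕ)] x ∈ Metric.ball (i : X) (r / 2))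
  have hc0 : Measurable c0 := by
    refine measurable_pi_lambda _ fun k => measurable_pi_lambda _ fun i => measurable_to_bool ?_
    have : (fun x => c0 x k i) ⁻¹' {true} = T^[(k : ℕ)] ⁻¹' Metric.ball (i : X) (r / 2) := by
      ext x; simp [c0]
    rw [this]
    exact (hT.iterate k).measurable Metric.isOpen_ball.measurableSet
  let e := Fintype.equivFin (Fin m → t → Bool)
  refine ⟨_, fun x => e (c0 x), (Measurable.of_discrete (f := e)).comp hc0, fun x y hxy k hk => ?_⟩
  have h := e.injective hxy
  have hx := hcov (mem_univ (T^[k] x))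
  simp only [mem_iUnion] at hx
  obtain ⟨i, hi, hxi⟩ := hx
  have h2 := congrFun (congrFun h ⟨k, hk⟩) ⟨i, hi⟩
  simp only [c0, decide_eq_decide] at h2
  have hyi := h2.1 hxi
  rw [Metric.mem_ball] at hxi hyi
  have := dist_triangle_right (T^[k] x) (T^[k] y) i
  linarith

lemma exists_sep {T : X → X} (hT : Continuous T) [Nonempty X] {n : ℕ} (hn : 0 < n) {r : ℝ} (hr : 0 < r) :
    ∃ E : Finset X, E.Nonempty ∧ spanNum T n r Set.univ ≤ E.card ∧
      ∀ x ∈ E, ∀ y ∈ E, x ≠ y → ∃ k < n, r ≤ dist (T^[k] x) (T^[k] y) := by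
  classical
  obtain ⟨K, c, -, hc⟩ := exists_color hT n hr
  let S : Set ℕ := {k | ∃ E : Finset X, E.card = k ∧
    ∀ x ∈ E, ∀ y ∈ E, x ≠ y → ∃ k < n, r ≤ dist (T^[k] x) (T^[k] y)}
  have hb : BddAbove S := by
    refine ⟨K, ?_⟩
    rintro k ⟨E, rfl, hE⟩
    have := Finset.card_le_card_of_injOn (s := E) (t := Finset.univ) c (fun _ _ => by simp) (by
      intro x hx y hy hxy
      by_contra hne
      obtain ⟨k, hk, hd⟩ := hE x hx y hy hne
      exact absurd (hc x y hxy k hk) (not_lt.2 hd))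
    simpa using this
  have hne : S.Nonempty := ⟨0, ∅, by simp, by simp⟩
  obtain ⟨E, hEc, hE⟩ := Nat.sSup_mem hne hb
  have : Nonempty (Fin n) := ⟨⟨0, hn⟩⟩
  have hspan : ∀ z ∈ (Set.univ : Set X), ∃ y ∈ E, bowenDist T n z y < r := by
    intro z _
    by_contra hcon
    push Not at hcon
    have hz : z ∉ E := by
      intro hz
      have := hcon z hz
      simp [bowenDist] at this
      linarith
    have hk : ∀ y ∈ E, ∃ k < n, r ≤ dist (T^[k] z) (T^[k] y) := by
      intro y hy
      obtain ⟨i, hi⟩ := exists_eq_ciSup_of_finite (f := fun j : Fin n => dist (T^[(j : ℕ)] z) (T^[(j : ℕ)] y))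
      refine ⟨i, i.2, ?_⟩
      rw [hi]; exact hcon y hy
    have hmem : (insert z E).card ∈ S := by
      refine ⟨_, rfl, ?_⟩
      intro x hx y hy hxy
      rw [Finset.mem_insert] at hx hy
      rcases hx with rfl | hx <;> rcases hy with rfl | hy
      · exact absurd rfl hxy
      · exact hk y hy
      · obtain ⟨k, h1, h2⟩ := hk x hx
        exact ⟨k, h1, by rwa [dist_comm]⟩
      · exact hE x hx y hy hxy
    have := le_csSup hb hmem
    rw [Finset.card_insert_of_notMem hz] at this
    omega
  refine ⟨E, ?_, Nat.sInf_le ⟨E, rfl, hspan⟩, hE⟩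
  obtain ⟨y, hy, -⟩ := hspan (Classical.arbitrary X) trivial
  exact ⟨y, hy⟩

lemma Ach.blocks {T : X → X} (hT : Continuous T) {ε θ : ℝ} (hθ : 0 ≤ θ) {μ : Measure X}
    [IsProbabilityMeasure μ] (m t : ℕ) (v : ℕ → ℝ) (q : ℕ)
    (h : ∀ j < q, Ach T ε θ (μ.map (T^[t + j * m])) (Finset.range m) (v j)) :
    Ach T ε θ μ (Finset.Ico t (t + q * m)) (∑ j ∈ Finset.range q, v j) := by
  have : Nonempty X := nonempty_of_isProbabilityMeasure μ
  induction q with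
  | zero => simpa using Ach.default hT hθ μ (∅ : Finset ℕ) (ε := ε)
  | succ q ih =>
    have h1 := ih fun j hj => h j (by omega)
    have h2 := (h q (by omega)).shift hT
    have e : (Finset.range m).map (addRightEmbedding (t + q * m))
        = Finset.Ico (t + q * m) (t + (q + 1) * m) := by
      rw [Finset.range_eq_Ico, Finset.map_add_right_Ico]
      congr 1 <;> ring
    rw [e] at h2
    have h3 := Ach.cat hT (Finset.Ico_disjoint_Ico_consecutive _ _ _) h1 h2
    rw [Finset.Ico_union_Ico_eq_Ico (by omega) (by nlinarith)] at h3
    rwa [Finset.sum_range_succ]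

lemma sum_blocks (f : ℕ → ℝ) (m q : ℕ) :
    ∑ t ∈ Finset.range m, ∑ j ∈ Finset.range q, f (t + j * m) = ∑ i ∈ Finset.range (q * m), f i := by
  induction q with
  | zero => simp
  | succ q ih =>
    rw [add_mul, one_mul, Finset.sum_range_add, ← ih, ← Finset.sum_add_distrib]
    refine Finset.sum_congr rfl fun t _ => ?_
    rw [Finset.sum_range_succ, add_comm t (q * m)]

/-- averaged measure -/
def avg (T : X → X) (ν : Measure X) (n : ℕ) : Measure X :=
  (n : ℝ≥0∞)⁻¹ • ∑ i ∈ Finset.range n, ν.map (T^[i])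

lemma avg_prob {T : X → X} (hT : Continuous T) (ν : Measure X) [IsProbabilityMeasure ν] {n : ℕ}
    (hn : 0 < n) : IsProbabilityMeasure (avg T ν n) := by
  constructor
  simp only [avg, Measure.smul_apply, Measure.finsetSum_apply]
  rw [Finset.sum_congr (g := fun _ => (1 : ℝ≥0∞)) rfl fun i _ => by
    rw [Measure.map_apply (hT.iterate i).measurable MeasurableSet.univ, preimage_univ, measure_univ]]
  simp only [Finset.sum_const, Finset.card_range, nsmul_eq_mul, mul_one, smul_eq_mul]
  exact ENNReal.inv_mul_cancel (by exact_mod_cast hn.ne') (ENNReal.natCast_ne_top n)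

lemma avg_integral {T : X → X} (hT : Continuous T) (ν : Measure X) [IsProbabilityMeasure ν] (n : ℕ)
    {f : X → ℝ} (hf : Measurable f) {C : ℝ} (hC : ∀ x, |f x| ≤ C) :
    ∫ x, f x ∂(avg T ν n) = (n : ℝ)⁻¹ * ∑ i ∈ Finset.range n, ∫ x, f x ∂(ν.map (T^[i])) := by
  have : ∀ i ∈ Finset.range n, Integrable f (ν.map (T^[i])) := by
    intro i _
    have : IsProbabilityMeasure (ν.map (T^[i])) :=
      Measure.isProbabilityMeasure_map (hT.iterate i).measurable.aemeasurable
    exact Integrable.of_bound hf.aestronglyMeasurable C (Eventually.of_forall hC)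
  rw [avg, integral_smul_measure, integral_finsetSum_measure this]
  simp

lemma J_avg {T : X → X} (hT : Continuous T) {ε θ : ℝ} (ν : Measure X) [IsProbabilityMeasure ν] {n : ℕ}
    (hn : 0 < n) (W : Finset ℕ) {β : Type} [Fintype β] {φ : β → X → ℝ} (hk : IsKer φ) (L : β → ℕ → X) :
    ∑ i ∈ Finset.range n, J T ε θ (ν.map (T^[i])) W φ L ≤ n * J T ε θ (avg T ν n) W φ L := by
  have hn' : (0 : ℝ) < n := by exact_mod_cast hn
  unfold J
  rw [Finset.sum_comm, Finset.mul_sum]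
  refine Finset.sum_le_sum fun b _ => ?_
  have e1 := avg_integral hT ν n (hk.meas b) (C := 1) fun x => by
    rw [abs_of_nonneg (hk.nonneg b x)]; exact hk.le_one b x
  have e2 := avg_integral hT ν n (hk.meas_nml b) (C := 1) fun x => by
    rw [abs_of_nonneg (Real.negMulLog_nonneg (hk.nonneg b x) (hk.le_one b x))]
    exact negMulLog_le_one (hk.nonneg b x) (hk.le_one b x)
  have e3 := avg_integral hT ν n (f := fun x => φ b x * cost T ε W (L b) x)
    ((hk.meas b).mul (continuous_cost hT ε W (L b)).measurable) (C := W.card) fun x => by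
    rw [abs_of_nonneg (mul_nonneg (hk.nonneg b x) (cost_nonneg _ _ _ _ _))]
    calc _ ≤ 1 * (W.card : ℝ) := mul_le_mul (hk.le_one b x) (cost_le _ _ _ _ _)
          (cost_nonneg _ _ _ _ _) zero_le_one
      _ = _ := one_mul _
  have hconc := Real.concaveOn_negMulLog.le_map_sum (t := Finset.range n) (w := fun _ => (n : ℝ)⁻¹)
    (p := fun i => ∫ x, φ b x ∂(ν.map (T^[i]))) (fun _ _ => by positivity)
    (by simp [hn'.ne']) (fun i _ => mem_Ici.2 (integral_nonneg fun x => hk.nonneg b x))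
  simp only [smul_eq_mul, ← Finset.mul_sum] at hconc
  rw [e1, e2, e3]
  simp only [Finset.sum_add_distrib, Finset.sum_sub_distrib, ← Finset.mul_sum]
  have h4 := mul_le_mul_of_nonneg_left hconc hn'.le
  rw [← mul_assoc, mul_inv_cancel₀ hn'.ne', one_mul] at h4
  have h5 : ∀ S : ℝ, (n : ℝ) * ((n : ℝ)⁻¹ * S) = S := fun S => by field_simp
  rw [mul_add, mul_sub, h5, mul_left_comm (n : ℝ) θ, h5]
  linarith

lemma block_bound {T : X → X} (hT : Continuous T) {ε θ : ℝ} (hε : 0 < ε) (hθ : 0 ≤ θ) {n K : ℕ}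
    {E : Finset X} (hEn : E.Nonempty)
    (c : X → Fin K) (hc : ∀ x y, c x = c y → dist x y < 6 * ε)
    (hE : ∀ x ∈ E, ∀ y ∈ E, x ≠ y → ∃ k < n, 6 * ε ≤ dist (T^[k] x) (T^[k] y))
    {ν : Measure X} [IsProbabilityMeasure ν]
    (hν : ∀ f : X → ℝ, Measurable f → ∫ x, f x ∂ν = (E.card : ℝ)⁻¹ * ∑ x ∈ E, f x)
    (hn : 0 < n) {m : ℕ} (hm : 0 < m)
    {β : Type} [Fintype β] {φ : β → X → ℝ} (hk : IsKer φ) (L : β → ℕ → X) :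
    m * Real.log E.card ≤ n * J T ε θ (avg T ν n) (Finset.range m) φ L
      + m * (θ * (2 * m)) + m * (n * Real.log (1 + K * Real.exp (-θ))) := by
  have : Nonempty X := nonempty_of_isProbabilityMeasure ν
  have hp : ∀ i, IsProbabilityMeasure (ν.map (T^[i])) := fun i =>
    Measure.isProbabilityMeasure_map (hT.iterate i).measurable.aemeasurable
  obtain ⟨f, hf⟩ : ∃ f : ℕ → ℝ, f = fun i => J T ε θ (ν.map (T^[i])) (Finset.range m) φ L := ⟨_, rfl⟩
  have hf0 : ∀ i, 0 ≤ f i := fun i => by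
    have := hp i
    rw [hf]; exact J_nonneg hk _ hθ _ _
  have hDm := Nat.div_mul_le_self n m
  obtain ⟨D, hD⟩ : ∃ D, D = n / m := ⟨_, rfl⟩
  obtain ⟨q, hq⟩ : ∃ q, q = D - 1 := ⟨_, rfl⟩
  have hdm := Nat.div_add_mod n m
  have hml := Nat.mod_lt n hm
  rw [← hD] at hdm hDm
  have hqm : q * m ≤ n := by
    have : q ≤ D := by omega
    calc q * m ≤ D * m := Nat.mul_le_mul_right _ this
      _ ≤ n := hDm
  have hqm2 : n ≤ q * m + 2 * m := by
    have : D ≤ q + 1 := by omega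
    have := Nat.mul_le_mul_left m this
    nlinarith
  have main : ∀ t ∈ Finset.range m, Real.log E.card ≤
      ∑ j ∈ Finset.range q, f (t + j * m) + θ * (2 * m) + n * Real.log (1 + K * Real.exp (-θ)) := by
    intro t ht
    rw [Finset.mem_range] at ht
    have hb := Ach.blocks hT (ε := ε) hθ (μ := ν) m t (fun j => f (t + j * m)) q fun j _ =>
      ⟨β, inferInstance, φ, L, hk, by rw [hf]⟩
    have hsub : Finset.Ico t (t + q * m) ⊆ Finset.range n := by
      intro i hi
      rw [Finset.mem_Ico] at hi
      rw [Finset.mem_range]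
      rcases Nat.eq_zero_or_pos q with h0 | h0
      · rw [h0] at hi; omega
      · have : (q + 1) * m ≤ n := by
          have : q + 1 ≤ D := by omega
          calc (q + 1) * m ≤ D * m := Nat.mul_le_mul_right _ this
            _ ≤ n := hDm
        nlinarith
    have hd := Ach.default hT (ε := ε) hθ ν (Finset.range n \ Finset.Ico t (t + q * m))
    have hcat := Ach.cat hT Finset.disjoint_sdiff hb hd
    rw [Finset.union_sdiff_of_subset hsub] at hcat
    have := fano hε hθ hEn c hc hE hν hT hcat
    have hcard : ((Finset.range n \ Finset.Ico t (t + q * m)).card : ℝ) ≤ 2 * m := by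
      rw [Finset.card_sdiff_of_subset hsub, Finset.card_range, Nat.card_Ico]
      have : n - (t + q * m - t) ≤ 2 * m := by omega
      exact_mod_cast this
    have := mul_le_mul_of_nonneg_left hcard hθ
    linarith
  have hs := Finset.sum_le_sum main
  simp only [Finset.sum_const, Finset.card_range, nsmul_eq_mul, Finset.sum_add_distrib] at hs
  rw [sum_blocks] at hs
  have h2 : ∑ i ∈ Finset.range (q * m), f i ≤ ∑ i ∈ Finset.range n, f i :=
    Finset.sum_le_sum_of_subset_of_nonneg (Finset.range_subset_range.2 hqm) fun i _ _ => hf0 i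
  have h3 := J_avg hT (ε := ε) (θ := θ) ν hn (Finset.range m) hk L
  rw [hf] at h2 hs
  linarith

end
end MMDP

namespace MMDP
set_option linter.unusedSectionVars false
open Real (negMulLog)
section
variable {X : Type*} [MetricSpace X] [CompactSpace X] [MeasurableSpace X] [BorelSpace X]

/-- uniform measure -/
def unif (E : Finset X) : Measure X := (E.card : ℝ≥0∞)⁻¹ • ∑ x ∈ E, Measure.dirac x

lemma unif_prob {E : Finset X} (hE : E.Nonempty) : IsProbabilityMeasure (unif E) := by
  constructor
  simp only [unif, Measure.smul_apply, Measure.finsetSum_apply, measure_univ, Finset.sum_const,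
    nsmul_eq_mul, mul_one, smul_eq_mul]
  exact ENNReal.inv_mul_cancel (by exact_mod_cast hE.card_pos.ne') (ENNReal.natCast_ne_top _)

lemma unif_integral (E : Finset X) (f : X → ℝ) (hf : Measurable f) :
    ∫ x, f x ∂(unif E) = (E.card : ℝ)⁻¹ * ∑ x ∈ E, f x := by
  rw [unif, integral_smul_measure, integral_finsetSum_measure fun i _ => integrable_dirac (by simp)]
  simp [integral_dirac]

lemma avg_almost_inv {T : X → X} (hT : Continuous T) (ν : Measure X) [IsProbabilityMeasure ν] (n : ℕ)
    {f : X → ℝ} (hf : Measurable f) {C : ℝ} (hC : ∀ x, |f x| ≤ C) :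
    |∫ x, f (T x) ∂(avg T ν n) - ∫ x, f x ∂(avg T ν n)| ≤ (n : ℝ)⁻¹ * (2 * C) := by
  have e1 : ∀ i (g : X → ℝ), Measurable g → ∫ x, g x ∂(ν.map (T^[i])) = ∫ x, g (T^[i] x) ∂ν := fun i g hg =>
    integral_map (hT.iterate i).measurable.aemeasurable hg.aestronglyMeasurable
  rw [avg_integral hT ν n (f := fun x => f (T x)) (hf.comp hT.measurable) (fun x => hC _),
    avg_integral hT ν n hf hC, ← mul_sub, ← Finset.sum_sub_distrib]
  have e2 : ∀ i, ∫ x, f (T x) ∂(ν.map (T^[i])) - ∫ x, f x ∂(ν.map (T^[i]))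
      = ∫ x, f (T^[i + 1] x) ∂ν - ∫ x, f (T^[i] x) ∂ν := by
    intro i
    rw [e1 i (fun x => f (T x)) (hf.comp hT.measurable), e1 i f hf]
    simp only [Function.iterate_succ_apply']
  simp only [e2]
  rw [Finset.sum_range_sub (fun i => ∫ x, f (T^[i] x) ∂ν), abs_mul, abs_of_nonneg (by positivity)]
  refine mul_le_mul_of_nonneg_left ?_ (by positivity)
  have e3 : ∀ i, |∫ x, f (T^[i] x) ∂ν| ≤ C := by
    intro i
    have := norm_integral_le_of_norm_le_const (μ := ν) (f := fun x => f (T^[i] x)) (C := C)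
      (Eventually.of_forall fun x => hC _)
    simpa using this
  calc _ ≤ |∫ x, f (T^[n] x) ∂ν| + |∫ x, f (T^[0] x) ∂ν| := abs_sub _ _
    _ ≤ _ := by linarith [e3 n, e3 0]

lemma mp_of_integral {T : X → X} (hT : Continuous T) (μ : ProbabilityMeasure X)
    (h : ∀ f : C(X, ℝ), ∫ x, f (T x) ∂(μ : Measure X) = ∫ x, f x ∂(μ : Measure X)) :
    MeasurePreserving T (μ : Measure X) (μ : Measure X) := by
  refine ⟨hT.measurable, ?_⟩
  have : IsProbabilityMeasure ((μ : Measure X).map T) :=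
    Measure.isProbabilityMeasure_map hT.measurable.aemeasurable
  refine ext_of_forall_integral_eq_of_IsFiniteMeasure fun f => ?_
  rw [integral_map hT.measurable.aemeasurable f.continuous.measurable.aestronglyMeasurable]
  exact h f.toContinuousMap

lemma exists_inv [Nonempty X] {T : X → X} (hT : Continuous T) {ε θ : ℝ} (hε : 0 < ε) (hθ : 0 ≤ θ)
    {K : ℕ} (c : X → Fin K) (hc : ∀ x y, c x = c y → dist x y < 6 * ε) {a : ℝ} (ha0 : 0 ≤ a)
    (ha : ENNReal.ofReal a < spanGrowth T (6 * ε)) :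
    ∃ μ : ProbabilityMeasure X, MeasurePreserving T (μ : Measure X) (μ : Measure X) ∧
      ∀ m : ℕ, 0 < m → ∀ v, Ach T ε θ (μ : Measure X) (Finset.range m) v →
        m * (a - Real.log (1 + K * Real.exp (-θ))) ≤ v := by
  classical
  have h6 : 0 < 6 * ε := by linarith
  have hex : ∀ n : ℕ, ∃ E : Finset X, E.Nonempty ∧ (0 < n → spanNum T n (6 * ε) Set.univ ≤ E.card ∧
      ∀ x ∈ E, ∀ y ∈ E, x ≠ y → ∃ k < n, 6 * ε ≤ dist (T^[k] x) (T^[k] y)) := by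
    intro n
    rcases Nat.eq_zero_or_pos n with rfl | hn
    · exact ⟨{Classical.arbitrary X}, by simp, by simp⟩
    · obtain ⟨E, h1, h2, h3⟩ := exists_sep hT hn h6
      exact ⟨E, h1, fun _ => ⟨h2, h3⟩⟩
  choose E hEn hE using hex
  have hup : ∀ n, IsProbabilityMeasure (unif (E n)) := fun n => unif_prob (hEn n)
  let u : ℕ → ProbabilityMeasure X := fun n =>
    ⟨avg T (unif (E (n + 1))) (n + 1), avg_prob hT _ n.succ_pos⟩
  have hu : ∀ n, (u n : Measure X) = avg T (unif (E (n + 1))) (n + 1) := fun n => rfl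
  have hfreq0 : ∃ᶠ n : ℕ in atTop, ENNReal.ofReal a <
      ENNReal.ofReal (Real.log (spanNum T n (6 * ε) Set.univ)) / (n : ℝ≥0∞) :=
    frequently_lt_of_lt_limsup (by isBoundedDefault) ha
  let G : Set ℕ := {n | a * ((n + 1 : ℕ) : ℝ) ≤ Real.log (E (n + 1)).card}
  have hfreq : ∃ᶠ n : ℕ in atTop, n ∈ G := by
    rw [frequently_atTop] at hfreq0 ⊢
    intro N
    obtain ⟨n, hn, hlt⟩ := hfreq0 (N + 1)
    obtain ⟨k, rfl⟩ : ∃ k, n = k + 1 := ⟨n - 1, by omega⟩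
    refine ⟨k, by omega, ?_⟩
    have hk0 : ((k + 1 : ℕ) : ℝ≥0∞) ≠ 0 := by exact_mod_cast k.succ_ne_zero
    rw [ENNReal.lt_div_iff_mul_lt (Or.inl hk0) (Or.inl (ENNReal.natCast_ne_top _)),
      ← ENNReal.ofReal_natCast, ← ENNReal.ofReal_mul ha0, ENNReal.ofReal_lt_ofReal_iff_of_nonneg
      (by positivity)] at hlt
    refine hlt.le.trans ?_
    rcases Nat.eq_zero_or_pos (spanNum T (k + 1) (6 * ε) Set.univ) with h0 | h0
    · rw [h0]; simp only [Nat.cast_zero, Real.log_zero]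
      exact Real.log_natCast_nonneg _
    · refine Real.log_le_log (by exact_mod_cast h0) ?_
      exact_mod_cast (hE (k + 1) k.succ_pos).1
  let F : Filter ℕ := atTop ⊓ 𝓟 G
  have hF : F.NeBot := frequently_mem_iff_neBot.1 hfreq
  obtain ⟨μ, hμ⟩ := exists_clusterPt_of_compactSpace (map u F)
  have hμ' : MapClusterPt μ F u := hμ
  refine ⟨μ, mp_of_integral hT μ fun f => ?_, fun m hm v hv => ?_⟩
  · by_contra hne
    let g : ProbabilityMeasure X → ℝ := fun ν => |∫ x, f (T x) ∂(ν : Measure X) - ∫ x, f x ∂(ν : Measure X)|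
    have hg : Continuous g :=
      ((ProbabilityMeasure.continuous_integral_continuousMap (f.comp ⟨T, hT⟩)).sub
        (ProbabilityMeasure.continuous_integral_continuousMap f)).abs
    have hpos : 0 < g μ := abs_pos.2 (sub_ne_zero.2 hne)
    have hfr := hμ'.frequently ((hg.tendsto μ).eventually (lt_mem_nhds (half_lt_self hpos)))
    obtain ⟨C, hC⟩ : ∃ C, ∀ x, |f x| ≤ C := ⟨‖f‖, fun x => f.norm_coe_le_norm x⟩
    have hlim : Tendsto (fun n : ℕ => ((n + 1 : ℕ) : ℝ)⁻¹ * (2 * C)) atTop (𝓝 0) := by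
      have : Tendsto (fun n : ℕ => ((n + 1 : ℕ) : ℝ)⁻¹) atTop (𝓝 0) :=
        (tendsto_inv_atTop_nhds_zero_nat (𝕜 := ℝ)).comp (tendsto_add_atTop_nat 1)
      simpa using this.mul_const (2 * C)
    have hev : ∀ᶠ n : ℕ in F, ((n + 1 : ℕ) : ℝ)⁻¹ * (2 * C) < g μ / 2 :=
      (hlim.mono_left inf_le_left).eventually (gt_mem_nhds (half_pos hpos))
    obtain ⟨n, h1, h2⟩ := (hfr.and_eventually hev).exists
    have := avg_almost_inv hT (unif (E (n + 1))) (n + 1) f.continuous.measurable hC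
    have h3 : g (u n) ≤ ((n + 1 : ℕ) : ℝ)⁻¹ * (2 * C) := this
    linarith
  · by_contra hlt
    push Not at hlt
    obtain ⟨v', hv1, hv2⟩ := exists_between hlt
    obtain ⟨β, _, φ, L, hk, hev⟩ := hv.eventually hT hv1
    have hfr := hμ'.frequently hev
    set lam := Real.log (1 + K * Real.exp (-θ)) with hlam
    have hgap : 0 < m * (a - lam) - v' := by linarith
    have hlim : Tendsto (fun n : ℕ => ((n + 1 : ℕ) : ℝ) * (m * (a - lam) - v')) atTop atTop := by
      have : Tendsto (fun n : ℕ => ((n + 1 : ℕ) : ℝ)) atTop atTop :=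
        tendsto_natCast_atTop_atTop.comp (tendsto_add_atTop_nat 1)
      exact this.atTop_mul_const hgap
    have hev2 : ∀ᶠ n : ℕ in F, m * (θ * (2 * m)) < ((n + 1 : ℕ) : ℝ) * (m * (a - lam) - v') :=
      (hlim.mono_left inf_le_left).eventually (eventually_gt_atTop _)
    have hev3 : ∀ᶠ n : ℕ in F, n ∈ G := mem_inf_of_right (mem_principal_self _)
    obtain ⟨n, h1, h2, h3⟩ := (hfr.and_eventually (hev2.and hev3)).exists
    have hb := block_bound hT hε hθ (hEn (n + 1)) c hc (hE (n + 1) n.succ_pos).2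
      (unif_integral (E (n + 1))) n.succ_pos hm hk L (ν := unif (E (n + 1)))
    rw [hu] at h1
    have h4 : a * ((n + 1 : ℕ) : ℝ) ≤ Real.log (E (n + 1)).card := h3
    have h5 := mul_le_mul_of_nonneg_left h4 (Nat.cast_nonneg (α := ℝ) m)
    have hnpos : (0 : ℝ) < ((n + 1 : ℕ) : ℝ) := by exact_mod_cast n.succ_pos
    have h6 := mul_lt_mul_of_pos_left h1 hnpos
    rw [← hlam] at hb
    nlinarith

end
end MMDP

namespace MMDP
set_option linter.unusedSectionVars false
open Real (negMulLog)
section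
variable {X : Type*} [MetricSpace X] [CompactSpace X] [MeasurableSpace X] [BorelSpace X]

/-- achievable rates -/
def SR (T : X → X) (ε θ : ℝ) (μ : ProbabilityMeasure X) : Set ℝ :=
  {r | ∃ m : ℕ, 0 < m ∧ Ach T ε θ (μ : Measure X) (Finset.range m) (m * r)}

def CR (T : X → X) (ε θ : ℝ) (μ : ProbabilityMeasure X) : ℝ := sInf (SR T ε θ μ)

lemma SR_nonneg {T : X → X} {ε θ : ℝ} (hθ : 0 ≤ θ) {μ : ProbabilityMeasure X} {r : ℝ}
    (h : r ∈ SR T ε θ μ) : 0 ≤ r := by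
  obtain ⟨m, hm, β, _, φ, L, hk, hJ⟩ := h
  have h1 := (J_nonneg hk (μ : Measure X) (T := T) (ε := ε) hθ (Finset.range m) L).trans hJ
  have hm' : (0 : ℝ) < m := by exact_mod_cast hm
  exact nonneg_of_mul_nonneg_right h1 hm'

lemma SR_bdd {T : X → X} {ε θ : ℝ} (hθ : 0 ≤ θ) (μ : ProbabilityMeasure X) :
    BddBelow (SR T ε θ μ) := ⟨0, fun _ h => SR_nonneg hθ h⟩

lemma SR_nonempty {T : X → X} (hT : Continuous T) {ε θ : ℝ} (hθ : 0 ≤ θ) (μ : ProbabilityMeasure X) :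
    (SR T ε θ μ).Nonempty := by
  have : Nonempty X := nonempty_of_isProbabilityMeasure (μ : Measure X)
  refine ⟨θ, 1, one_pos, ?_⟩
  have := Ach.default hT (ε := ε) hθ (μ : Measure X) (Finset.range 1)
  simpa using this

lemma CR_usc {T : X → X} (hT : Continuous T) {ε θ : ℝ} (hθ : 0 ≤ θ) :
    UpperSemicontinuous (CR T ε θ) := by
  intro μ y hy
  obtain ⟨r, ⟨m, hm, hA⟩, hr⟩ := exists_lt_of_csInf_lt (SR_nonempty hT hθ μ) hy
  obtain ⟨r', h1, h2⟩ := exists_between hr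
  have hm' : (0 : ℝ) < m := by exact_mod_cast hm
  obtain ⟨β, _, φ, L, hk, hev⟩ := hA.eventually hT (mul_lt_mul_of_pos_left h1 hm')
  filter_upwards [hev] with ν hν
  exact (csInf_le (SR_bdd hθ ν) ⟨m, hm, β, inferInstance, φ, L, hk, hν.le⟩).trans_lt h2

lemma Ach.rep {T : X → X} (hT : Continuous T) {ε θ : ℝ} (hθ : 0 ≤ θ) {μ : Measure X}
    [IsProbabilityMeasure μ] (hμ : MeasurePreserving T μ μ) {m : ℕ} {r : ℝ}
    (h : Ach T ε θ μ (Finset.range m) (m * r)) (q : ℕ) :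
    Ach T ε θ μ (Finset.range (q * m)) ((q * m : ℕ) * r) := by
  have := Ach.blocks hT (ε := ε) hθ (μ := μ) m 0 (fun _ => m * r) q fun j _ => by
    rw [(hμ.iterate _).map_eq]; exact h
  rw [zero_add, ← Finset.range_eq_Ico] at this
  refine this.mono ?_
  simp only [Finset.sum_const, Finset.card_range, nsmul_eq_mul]
  push_cast; linarith

lemma CR_mix {T : X → X} (hT : Continuous T) {ε θ : ℝ} (hθ : 0 ≤ θ) {μ μ₁ μ₂ : ProbabilityMeasure X}
    (h1 : MeasurePreserving T (μ₁ : Measure X) μ₁) (h2 : MeasurePreserving T (μ₂ : Measure X) μ₂)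
    {l : ℝ} (hl : 0 ≤ l) (hl1 : l ≤ 1)
    (hμ : (μ : Measure X) = ENNReal.ofReal l • (μ₁ : Measure X) + ENNReal.ofReal (1 - l) • (μ₂ : Measure X)) {A : Set X}
    (hA : MeasurableSet A) (hA1 : (μ₁ : Measure X) Aᶜ = 0) (hA2 : (μ₂ : Measure X) A = 0) :
    CR T ε θ μ ≤ l * CR T ε θ μ₁ + (1 - l) * CR T ε θ μ₂ := by
  have key : ∀ r₁ ∈ SR T ε θ μ₁, ∀ r₂ ∈ SR T ε θ μ₂, CR T ε θ μ ≤ l * r₁ + (1 - l) * r₂ := by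
    rintro r₁ ⟨m₁, hm₁, a₁⟩ r₂ ⟨m₂, hm₂, a₂⟩
    refine le_of_forall_pos_le_add fun e he => ?_
    obtain ⟨k, hk⟩ := exists_nat_gt (2 / e)
    have hkpos : (0 : ℝ) < k := (by positivity : (0:ℝ) < 2 / e).trans hk
    have hkn : 0 < k := by exact_mod_cast hkpos
    have b₁ := a₁.rep hT hθ h1 (k * m₂)
    have b₂ := a₂.rep hT hθ h2 (k * m₁)
    have en : k * m₁ * m₂ = k * m₂ * m₁ := by ring
    rw [en] at b₂
    have b := Ach.mix hT hl hl1 hμ hA hA1 hA2 b₁ b₂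
    obtain ⟨N, hN⟩ : ∃ N, N = k * m₂ * m₁ := ⟨_, rfl⟩
    rw [← hN] at b
    have hkN : k ≤ N := by
      rw [hN, mul_assoc]; exact Nat.le_mul_of_pos_right _ (Nat.mul_pos hm₂ hm₁)
    have hNpos : 0 < N := hkn.trans_le hkN
    refine csInf_le (SR_bdd hθ μ) ⟨N, hNpos, b.mono ?_⟩
    have h3 : 2 ≤ (N : ℝ) * e := by
      have : (k : ℝ) ≤ N := by exact_mod_cast hkN
      rw [div_lt_iff₀ he] at hk
      nlinarith
    nlinarith
  refine le_of_forall_pos_le_add fun e he => ?_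
  obtain ⟨r₁, hr₁, e₁⟩ := exists_lt_of_csInf_lt (SR_nonempty hT hθ μ₁) (lt_add_of_pos_right (CR T ε θ μ₁) he)
  obtain ⟨r₂, hr₂, e₂⟩ := exists_lt_of_csInf_lt (SR_nonempty hT hθ μ₂) (lt_add_of_pos_right (CR T ε θ μ₂) he)
  have := key r₁ hr₁ r₂ hr₂
  have := mul_le_mul_of_nonneg_left e₁.le hl
  have := mul_le_mul_of_nonneg_left e₂.le (sub_nonneg.2 hl1)
  linarith

/-- test functionals -/
def gI (i : ℕ) (μ : ProbabilityMeasure X) : ℝ :=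
  (1 + ‖TopologicalSpace.denseSeq C(X, ℝ) i‖)⁻¹ * ∫ x, TopologicalSpace.denseSeq C(X, ℝ) i x ∂(μ : Measure X)

lemma gI_cont (i : ℕ) : Continuous (gI (X := X) i) :=
  continuous_const.mul (ProbabilityMeasure.continuous_integral_continuousMap _)

lemma integral_le_norm (f : C(X, ℝ)) (μ : Measure X) [IsProbabilityMeasure μ] :
    |∫ x, f x ∂μ| ≤ ‖f‖ := by
  have := norm_integral_le_of_norm_le_const (μ := μ) (f := fun x => f x) (C := ‖f‖)
      (Eventually.of_forall fun x => f.norm_coe_le_norm x)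
  simpa using this

lemma gI_le (i : ℕ) (μ : ProbabilityMeasure X) : |gI i μ| ≤ 1 := by
  unfold gI
  rw [abs_mul, abs_of_nonneg (by positivity), inv_mul_le_iff₀ (by positivity), mul_one]
  have := integral_le_norm (TopologicalSpace.denseSeq C(X, ℝ) i) (μ : Measure X)
  linarith

lemma gI_sep {μ₁ μ₂ : ProbabilityMeasure X} (h : ∀ i, gI i μ₁ = gI i μ₂) : μ₁ = μ₂ := by
  have hint : ∀ f : C(X, ℝ), Integrable (fun x => f x) (μ₁ : Measure X) ∧ Integrable (fun x => f x) (μ₂ : Measure X) :=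
    fun f => ⟨Integrable.of_bound f.continuous.measurable.aestronglyMeasurable ‖f‖
      (Eventually.of_forall fun x => f.norm_coe_le_norm x),
      Integrable.of_bound f.continuous.measurable.aestronglyMeasurable ‖f‖
      (Eventually.of_forall fun x => f.norm_coe_le_norm x)⟩
  have key : ∀ f : C(X, ℝ), ∫ x, f x ∂(μ₁ : Measure X) = ∫ x, f x ∂(μ₂ : Measure X) := by
    intro f
    refine eq_of_abs_sub_le_all fun e he => ?_
    obtain ⟨i, hi⟩ := (TopologicalSpace.denseRange_denseSeq C(X, ℝ)).exists_dist_lt f (half_pos he)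
    set g := TopologicalSpace.denseSeq C(X, ℝ) i with hg
    have h0 : ∫ x, g x ∂(μ₁ : Measure X) = ∫ x, g x ∂(μ₂ : Measure X) := by
      have := h i
      unfold gI at this
      exact mul_left_cancel₀ (by positivity) this
    have e1 : ∀ μ : ProbabilityMeasure X, |∫ x, f x ∂(μ : Measure X) - ∫ x, g x ∂(μ : Measure X)| ≤ e / 2 := by
      intro μ
      have hi' : ∀ f : C(X, ℝ), Integrable (fun x => f x) (μ : Measure X) := fun f =>
        Integrable.of_bound f.continuous.measurable.aestronglyMeasurable ‖f‖
          (Eventually.of_forall fun x => f.norm_coe_le_norm x)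
      rw [← integral_sub (hi' f) (hi' g)]
      have := integral_le_norm (f - g) (μ : Measure X)
      rw [← dist_eq_norm] at this
      exact this.trans hi.le
    have a1 := abs_le.1 (e1 μ₁)
    have a2 := abs_le.1 (e1 μ₂)
    rw [abs_le]
    constructor <;> linarith [a1.1, a1.2, a2.1, a2.2]
  have : (μ₁ : Measure X) = μ₂ := ext_of_forall_integral_eq_of_IsFiniteMeasure fun f => key f.toContinuousMap
  exact Subtype.ext this

def Phi (μ : ProbabilityMeasure X) : ℝ := ∑' i : ℕ, (1 / 2 : ℝ) ^ i * gI i μ ^ 2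

lemma Phi_term_nonneg (i : ℕ) (μ : ProbabilityMeasure X) : 0 ≤ (1 / 2 : ℝ) ^ i * gI i μ ^ 2 := by
  positivity

lemma Phi_term_le (i : ℕ) (μ : ProbabilityMeasure X) :
    (1 / 2 : ℝ) ^ i * gI i μ ^ 2 ≤ (1 / 2 : ℝ) ^ i := by
  have : gI i μ ^ 2 ≤ 1 := (sq_le_one_iff_abs_le_one _).2 (gI_le i μ)
  calc _ ≤ (1 / 2 : ℝ) ^ i * 1 := mul_le_mul_of_nonneg_left this (by positivity)
    _ = _ := mul_one _

lemma Phi_summable (μ : ProbabilityMeasure X) : Summable fun i : ℕ => (1 / 2 : ℝ) ^ i * gI i μ ^ 2 :=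
  summable_geometric_two.of_nonneg_of_le (fun i => Phi_term_nonneg i μ) fun i => Phi_term_le i μ

lemma Phi_cont : Continuous (Phi (X := X)) := by
  refine continuous_tsum (fun i => continuous_const.mul ((gI_cont i).pow 2)) summable_geometric_two
    fun i μ => ?_
  rw [Real.norm_of_nonneg (Phi_term_nonneg i μ)]
  exact Phi_term_le i μ

lemma Phi_nonneg (μ : ProbabilityMeasure X) : 0 ≤ Phi μ := tsum_nonneg fun i => Phi_term_nonneg i μ

lemma Phi_le (μ : ProbabilityMeasure X) : Phi μ ≤ 2 := by
  rw [← tsum_geometric_two]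
  exact (Phi_summable μ).tsum_le_tsum (fun i => Phi_term_le i μ) summable_geometric_two

lemma Phi_strict {μ μ₁ μ₂ : ProbabilityMeasure X} (hne : μ₁ ≠ μ₂)
    {l : ℝ} (hl : 0 < l) (hl1 : l < 1)
    (hμ : (μ : Measure X) = ENNReal.ofReal l • (μ₁ : Measure X) + ENNReal.ofReal (1 - l) • (μ₂ : Measure X)) :
    Phi μ < l * Phi μ₁ + (1 - l) * Phi μ₂ := by
  have hg : ∀ i, gI i μ = l * gI i μ₁ + (1 - l) * gI i μ₂ := by
    intro i
    unfold gI
    rw [integral_mix hl.le hl1.le hμ]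
    · ring
    all_goals
      exact Integrable.of_bound (ContinuousMap.continuous _).measurable.aestronglyMeasurable _
        (Eventually.of_forall fun x => ContinuousMap.norm_coe_le_norm _ x)
  obtain ⟨i, hi⟩ : ∃ i, gI i μ₁ ≠ gI i μ₂ := by
    by_contra hcon
    push Not at hcon
    exact hne (gI_sep hcon)
  have ident : ∀ i, l * ((1 / 2 : ℝ) ^ i * gI i μ₁ ^ 2) + (1 - l) * ((1 / 2 : ℝ) ^ i * gI i μ₂ ^ 2)
      - (1 / 2 : ℝ) ^ i * gI i μ ^ 2 = (1 / 2 : ℝ) ^ i * (l * (1 - l) * (gI i μ₁ - gI i μ₂) ^ 2) := by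
    intro i; rw [hg]; ring
  have hl' : 0 < 1 - l := sub_pos.2 hl1
  unfold Phi
  rw [← tsum_mul_left, ← tsum_mul_left, ← ((Phi_summable μ₁).mul_left l).tsum_add ((Phi_summable μ₂).mul_left _)]
  refine Summable.tsum_lt_tsum (i := i) (fun j => ?_) ?_ (Phi_summable μ)
    (((Phi_summable μ₁).mul_left l).add ((Phi_summable μ₂).mul_left _))
  · rw [← sub_nonneg, ident]; positivity
  · rw [← sub_pos, ident]
    have := sub_ne_zero.2 hi
    positivity

lemma isClosed_inv {T : X → X} (hT : Continuous T) :
    IsClosed {μ : ProbabilityMeasure X | MeasurePreserving T (μ : Measure X) μ} := by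
  have : {μ : ProbabilityMeasure X | MeasurePreserving T (μ : Measure X) μ}
      = ⋂ f : C(X, ℝ), {μ : ProbabilityMeasure X | ∫ x, f (T x) ∂(μ : Measure X) = ∫ x, f x ∂(μ : Measure X)} := by
    ext μ
    simp only [mem_setOf_eq, mem_iInter]
    refine ⟨fun h f => ?_, fun h => mp_of_integral hT μ h⟩
    conv_rhs => rw [← h.map_eq]
    rw [integral_map hT.measurable.aemeasurable f.continuous.measurable.aestronglyMeasurable]
  rw [this]
  exact isClosed_iInter fun f => isClosed_eq
    (ProbabilityMeasure.continuous_integral_continuousMap (f.comp ⟨T, hT⟩))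
    (ProbabilityMeasure.continuous_integral_continuousMap f)

lemma exists_erg {T : X → X} (hT : Continuous T) {ε θ : ℝ} (hθ : 0 ≤ θ) (μ₀ : ProbabilityMeasure X)
    (h₀ : MeasurePreserving T (μ₀ : Measure X) μ₀) {δ : ℝ} (hδ : 0 < δ) :
    ∃ μ : ProbabilityMeasure X, Ergodic T (μ : Measure X) ∧ CR T ε θ μ₀ - 2 * δ ≤ CR T ε θ μ := by
  obtain ⟨μ, hμ, hmax⟩ := UpperSemicontinuousOn.exists_isMaxOn
    (f := fun μ : ProbabilityMeasure X => CR T ε θ μ + δ * Phi μ) ⟨μ₀, h₀⟩ (isClosed_inv hT).isCompact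
    (((CR_usc hT hθ).add (continuous_const.mul Phi_cont).upperSemicontinuous).upperSemicontinuousOn _)
  have hmax' : ∀ ν : ProbabilityMeasure X, MeasurePreserving T (ν : Measure X) ν →
      CR T ε θ ν + δ * Phi ν ≤ CR T ε θ μ + δ * Phi μ := fun ν hν => hmax hν
  have hf : MeasurePreserving T (μ : Measure X) μ := hμ
  refine ⟨μ, ⟨hf, ⟨?_⟩⟩, ?_⟩
  · intro s hsm hfs
    by_contra H
    obtain ⟨hs, hs'⟩ : (μ : Measure X) s ≠ 0 ∧ (μ : Measure X) sᶜ ≠ 0 := by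
      simpa [eventuallyConst_set, ae_iff, and_comm] using! H
    have hinv : ∀ {s : Set X}, MeasurableSet s → T ⁻¹' s = s →
        MeasurePreserving T (ProbabilityTheory.cond (μ : Measure X) s) (ProbabilityTheory.cond (μ : Measure X) s) := by
      intro s hsm hfs
      refine MeasurePreserving.smul_measure ?_ _
      have := hf.restrict_preimage hsm
      rwa [hfs] at this
    let μ₁ : ProbabilityMeasure X := ⟨ProbabilityTheory.cond (μ : Measure X) s, ProbabilityTheory.cond_isProbabilityMeasure hs⟩
    let μ₂ : ProbabilityMeasure X := ⟨ProbabilityTheory.cond (μ : Measure X) sᶜ, ProbabilityTheory.cond_isProbabilityMeasure hs'⟩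
    have i1 : MeasurePreserving T (μ₁ : Measure X) μ₁ := hinv hsm hfs
    have i2 : MeasurePreserving T (μ₂ : Measure X) μ₂ := hinv hsm.compl (by rw [preimage_compl, hfs])
    have hA1 : (μ₁ : Measure X) sᶜ = 0 := by
      change ProbabilityTheory.cond (μ : Measure X) s sᶜ = 0
      rw [ProbabilityTheory.cond_apply hsm]; simp
    have hA2 : (μ₂ : Measure X) s = 0 := by
      change ProbabilityTheory.cond (μ : Measure X) sᶜ s = 0
      rw [ProbabilityTheory.cond_apply hsm.compl]; simp
    have hne : μ₁ ≠ μ₂ := by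
      intro h
      rw [← h] at hA2
      have h3 := measure_add_measure_compl (μ := (μ₁ : Measure X)) hsm
      rw [hA1, hA2, measure_univ] at h3
      simp at h3
    let l : ℝ := (μ : Measure X).real s
    have hl : 0 < l := ENNReal.toReal_pos hs (measure_ne_top _ _)
    have hlc : 1 - l = (μ : Measure X).real sᶜ := by rw [probReal_compl_eq_one_sub hsm]
    have hl1 : l < 1 := by
      rw [← sub_pos, hlc]; exact ENNReal.toReal_pos hs' (measure_ne_top _ _)
    have hmix : (μ : Measure X) = ENNReal.ofReal l • (μ₁ : Measure X) + ENNReal.ofReal (1 - l) • (μ₂ : Measure X) := by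
      rw [hlc]
      simp only [l, Measure.real, ENNReal.ofReal_toReal (measure_ne_top _ _)]
      change (μ : Measure X) = (μ : Measure X) s • ProbabilityTheory.cond (μ : Measure X) s +
        (μ : Measure X) sᶜ • ProbabilityTheory.cond (μ : Measure X) sᶜ
      rw [ProbabilityTheory.cond, ProbabilityTheory.cond, smul_smul, smul_smul,
        ENNReal.mul_inv_cancel hs (measure_ne_top _ _), ENNReal.mul_inv_cancel hs' (measure_ne_top _ _),
        one_smul, one_smul, Measure.restrict_add_restrict_compl hsm]
    have c1 := CR_mix hT (ε := ε) hθ i1 i2 hl.le hl1.le hmix hsm hA1 hA2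
    have c2 := Phi_strict hne hl hl1 hmix
    have m1 := mul_le_mul_of_nonneg_left (hmax' μ₁ i1) hl.le
    have m2 := mul_le_mul_of_nonneg_left (hmax' μ₂ i2) (sub_pos.2 hl1).le
    have c3 := mul_lt_mul_of_pos_left c2 hδ
    nlinarith
  · have := hmax' μ₀ h₀
    have := mul_nonneg hδ.le (Phi_nonneg μ₀)
    have := mul_le_mul_of_nonneg_left (Phi_le μ) hδ.le
    linarith

end
end MMDP

namespace MMDP
set_option linter.unusedSectionVars false
open Real (negMulLog)
section

lemma int_fin {Y γ : Type*} [MeasurableSpace Y] [MeasurableSpace γ] [MeasurableSingletonClass γ]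
    [Fintype γ] (ν : Measure Y) [IsFiniteMeasure ν] {f : Y → γ} (hf : Measurable f) (g : γ → ℝ) :
    ∫ y, g (f y) ∂ν = ∑ c, ν.real (f ⁻¹' {c}) * g c := by
  have hg : Measurable g := measurable_of_finite g
  rw [← integral_map hf.aemeasurable hg.aestronglyMeasurable]
  have : IsFiniteMeasure (ν.map f) := inferInstance
  rw [integral_fintype (Integrable.of_finite)]
  refine Finset.sum_congr rfl fun c _ => ?_
  rw [map_measureReal_apply hf (measurableSet_singleton c), smul_eq_mul]

lemma sum_inter_fin {Y γ : Type*} [MeasurableSpace Y] [MeasurableSpace γ] [MeasurableSingletonClass γ]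
    [Fintype γ] (ν : Measure Y) [IsFiniteMeasure ν] {f : Y → γ} (hf : Measurable f) {A : Set Y} :
    ∑ c, ν.real (A ∩ f ⁻¹' {c}) = ν.real A := by
  have := sum_measureReal_preimage_singleton (μ := ν.restrict A) Finset.univ (f := f)
    fun y _ => hf (measurableSet_singleton y)
  simp only [Finset.coe_univ, preimage_univ] at this
  rw [measureReal_restrict_apply MeasurableSet.univ, univ_inter] at this
  rw [← this]
  refine Finset.sum_congr rfl fun c _ => ?_
  rw [measureReal_restrict_apply (hf (measurableSet_singleton c)), inter_comm]

lemma isFinPartition_fibres {Y γ : Type*} [MeasurableSpace Y] [MeasurableSpace γ]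
    [MeasurableSingletonClass γ] [Fintype γ] [DecidableEq (Set Y)] {f : Y → γ} (hf : Measurable f) :
    IsFinPartition (Finset.univ.image fun c => f ⁻¹' {c}) := by
  refine ⟨?_, ?_, ?_⟩
  · intro s hs
    obtain ⟨c, -, rfl⟩ := Finset.mem_image.1 hs
    exact hf (measurableSet_singleton c)
  · intro s hs t ht hst
    obtain ⟨c, -, rfl⟩ := Finset.mem_image.1 hs
    obtain ⟨c', -, rfl⟩ := Finset.mem_image.1 ht
    refine Disjoint.preimage _ (disjoint_singleton.2 ?_)
    rintro rfl
    exact hst rfl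
  · refine eq_univ_of_forall fun y => ?_
    exact ⟨f ⁻¹' {f y}, by simp, rfl⟩

lemma mutualInfo_ge {Ω A B γ δ : Type*} [MeasurableSpace Ω] [MeasurableSpace A] [MeasurableSpace B]
    [MeasurableSpace γ] [MeasurableSingletonClass γ] [Fintype γ]
    [MeasurableSpace δ] [MeasurableSingletonClass δ] [Fintype δ] (P : Measure Ω) (ξ : Ω → A) (η : Ω → B)
    {f : A → γ} (hf : Measurable f) {g : B → δ} (hg : Measurable g) :
    ENNReal.ofReal (∑ i, ∑ j, P.real (ξ ⁻¹' (f ⁻¹' {i}) ∩ η ⁻¹' (g ⁻¹' {j})) *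
      Real.log (P.real (ξ ⁻¹' (f ⁻¹' {i}) ∩ η ⁻¹' (g ⁻¹' {j})) /
        (P.real (ξ ⁻¹' (f ⁻¹' {i})) * P.real (η ⁻¹' (g ⁻¹' {j}))))) ≤ mutualInfo P ξ η := by
  classical
  unfold mutualInfo
  refine le_iSup_of_le (Finset.univ.image fun c => f ⁻¹' {c}) (le_iSup_of_le (isFinPartition_fibres hf)
    (le_iSup_of_le (Finset.univ.image fun c => g ⁻¹' {c}) (le_iSup_of_le (isFinPartition_fibres hg) ?_)))
  refine ENNReal.ofReal_le_ofReal (le_of_eq ?_)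
  have d1 : ((Finset.univ : Finset γ) : Set γ).PairwiseDisjoint (fun c => f ⁻¹' {c}) := by
    intro c _ c' _ h
    exact Disjoint.preimage _ (disjoint_singleton.2 h)
  have d2 : ((Finset.univ : Finset δ) : Set δ).PairwiseDisjoint (fun c => g ⁻¹' {c}) := by
    intro c _ c' _ h
    exact Disjoint.preimage _ (disjoint_singleton.2 h)
  rw [Finset.sum_image_of_disjoint (by simp) d1]
  refine Finset.sum_congr rfl fun i _ => ?_
  rw [Finset.sum_image_of_disjoint (by simp) d2]
  rfl

variable {X : Type*} [MetricSpace X] [CompactSpace X] [MeasurableSpace X] [BorelSpace X]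

lemma ach_of_label {T : X → X} (hT : Continuous T) {ε θ s : ℝ} (hε : 0 < ε) (hθ : 0 ≤ θ) (hs : 0 < s) {m : ℕ} (hm : 0 < m)
    {μ : Measure X} [IsProbabilityMeasure μ] {ν : Measure (X × (Fin m → X))} [IsProbabilityMeasure ν]
    (hν : ν.map Prod.fst = μ) {K M : ℕ} {p : X → Fin K} (hp : Measurable p)
    (hpd : ∀ x y, p x = p y → ∀ k < m, dist (T^[k] x) (T^[k] y) < ε)
    {o : (Fin m → X) → Fin M} (ho : Measurable o) {q : Fin M → Fin m → X}
    (hq : ∀ᵐ z ∂ν, q (o z.2) = z.2)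
    (hdist : ∫⁻ z, (Nat.card {k : Fin m // ε ≤ dist (T^[(k : ℕ)] z.1) (z.2 k)} : ℝ≥0∞) ∂ν
        < ENNReal.ofReal (s * m))
    {I : ℝ} (hI0 : 0 ≤ I) (hI : mutualInfo ν Prod.fst Prod.snd ≤ ENNReal.ofReal I) :
    Ach T ε θ μ (Finset.range m) (I + θ * (s * m)) := by
  classical
  have hX : Nonempty X := nonempty_of_isProbabilityMeasure μ
  have hMpos : 0 < M := (o fun _ => Classical.arbitrary X).pos
  obtain ⟨w, hw⟩ : ∃ w : Fin K → Fin M → ℝ, w = fun i b =>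
    ν.real (Prod.fst ⁻¹' (p ⁻¹' {i}) ∩ Prod.snd ⁻¹' (o ⁻¹' {b})) := ⟨_, rfl⟩
  obtain ⟨a, ha⟩ : ∃ a : Fin K → ℝ, a = fun i => μ.real (p ⁻¹' {i}) := ⟨_, rfl⟩
  obtain ⟨r, hr⟩ : ∃ r : Fin M → ℝ, r = fun b => ν.real (Prod.snd ⁻¹' (o ⁻¹' {b})) := ⟨_, rfl⟩
  have ha' : ∀ i, a i = ν.real (Prod.fst ⁻¹' (p ⁻¹' {i})) := by
    intro i
    rw [ha]
    simp only [← hν]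
    rw [map_measureReal_apply measurable_fst (hp (measurableSet_singleton i))]
  have hw0 : ∀ i b, 0 ≤ w i b := fun i b => by rw [hw]; exact measureReal_nonneg
  have ha0 : ∀ i, 0 ≤ a i := fun i => by rw [ha]; exact measureReal_nonneg
  have hwa : ∀ i, ∑ b, w i b = a i := fun i => by
    rw [hw, ha']
    exact sum_inter_fin ν (f := fun z => o z.2) (ho.comp measurable_snd)
  have hwr : ∀ b, ∑ i, w i b = r b := fun b => by
    rw [hw, hr]; dsimp only
    have h1 := sum_inter_fin ν (f := fun z : X × (Fin m → X) => p z.1) (hp.comp measurable_fst)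
      (A := Prod.snd ⁻¹' (o ⁻¹' {b}))
    rw [← h1]
    exact Finset.sum_congr rfl fun i _ => by rw [inter_comm]; rfl
  have hwle : ∀ i b, w i b ≤ a i := fun i b => by
    rw [← hwa i]
    exact Finset.single_le_sum (f := fun b => w i b) (fun b _ => hw0 i b) (Finset.mem_univ b)
  have hwler : ∀ i b, w i b ≤ r b := fun i b => by
    rw [← hwr b]
    exact Finset.single_le_sum (f := fun i => w i b) (fun i _ => hw0 i b) (Finset.mem_univ i)
  obtain ⟨ψ, hψ⟩ : ∃ ψ : Fin M → Fin K → ℝ, ψ = fun b i => if a i = 0 then (M : ℝ)⁻¹ else w i b / a i :=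
    ⟨_, rfl⟩
  have hψ0 : ∀ b i, 0 ≤ ψ b i := by
    intro b i
    rw [hψ]; dsimp only
    split_ifs
    · positivity
    · exact div_nonneg (hw0 i b) (ha0 i)
  have hψ1 : ∀ i, ∑ b, ψ b i = 1 := by
    intro i
    rw [hψ]; dsimp only
    split_ifs with h
    · simp [hMpos.ne']
    · rw [← Finset.sum_div, hwa, div_self h]
  have haψ : ∀ b i, a i * ψ b i = w i b := by
    intro b i
    rw [hψ]; dsimp only
    split_ifs with h
    · have h1 := hwle i b
      rw [h] at h1 ⊢
      rw [zero_mul]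
      exact le_antisymm (hw0 i b) h1
    · field_simp
  have hk : IsKer (fun b x => ψ b (p x)) :=
    ⟨fun b => (measurable_of_finite (ψ b)).comp hp, fun b x => hψ0 b _, fun x => hψ1 _⟩
  obtain ⟨L, hL⟩ : ∃ L : Fin M → ℕ → X, L = fun b k => if h : k < m then q b ⟨k, h⟩ else Classical.arbitrary X :=
    ⟨_, rfl⟩
  obtain ⟨D, hD⟩ : ∃ D : Fin K → Fin M → ℝ, D = fun i b =>
    sSup (cost T ε (Finset.range m) (L b) '' (p ⁻¹' {i})) := ⟨_, rfl⟩
  have hD0 : ∀ i b, 0 ≤ D i b := by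
    intro i b
    rw [hD]
    refine Real.sSup_nonneg ?_
    rintro _ ⟨x, -, rfl⟩
    exact cost_nonneg _ _ _ _ _
  have hcD : ∀ b x, cost T ε (Finset.range m) (L b) x ≤ D (p x) b := by
    intro b x
    rw [hD]
    refine le_csSup ⟨(Finset.range m).card, ?_⟩ ⟨x, rfl, rfl⟩
    rintro _ ⟨x, -, rfl⟩
    exact cost_le _ _ _ _ _
  have hDN : ∀ b x, D (p x) b ≤ (Nat.card {k : Fin m // ε ≤ dist (T^[(k : ℕ)] x) (q b k)} : ℝ) := by
    intro b x
    rw [hD]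
    refine csSup_le ⟨_, x, rfl, rfl⟩ ?_
    rintro _ ⟨x', hx', rfl⟩
    rw [Nat.card_eq_fintype_card, Fintype.card_subtype, ← Finset.sum_boole]
    unfold cost
    rw [Finset.sum_range]
    refine Finset.sum_le_sum fun k _ => ?_
    have hLk : L b k = q b k := by rw [hL]; simp
    rw [hLk]
    split_ifs with h
    · exact chi_le_one _ _
    · refine (chi_eq_zero hε ?_).le
      have h1 := hpd x' x hx' k k.2
      have := dist_triangle (T^[(k : ℕ)] x') (T^[(k : ℕ)] x) (q b k)
      linarith
  refine ⟨Fin M, inferInstance, fun b x => ψ b (p x), L, hk, ?_⟩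
  -- information part
  have i1 : ∀ b, ∫ x, ψ b (p x) ∂μ = r b := by
    intro b
    rw [int_fin μ hp, ← hwr b]
    refine Finset.sum_congr rfl fun i _ => ?_
    rw [← haψ b i, ha]
  have i2 : ∀ b, ∫ x, negMulLog (ψ b (p x)) ∂μ = ∑ i, a i * negMulLog (ψ b i) := by
    intro b
    rw [int_fin μ hp (fun i => negMulLog (ψ b i)), ha]
  have hinfo : ∑ b, (negMulLog (r b) - ∑ i, a i * negMulLog (ψ b i)) ≤ I := by
    have h1 := (mutualInfo_ge ν Prod.fst Prod.snd hp ho).trans hI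
    rw [ENNReal.ofReal_le_ofReal_iff hI0] at h1
    refine le_trans (le_of_eq ?_) h1
    have e : ∀ i b, ν.real (Prod.fst ⁻¹' (p ⁻¹' {i}) ∩ Prod.snd ⁻¹' (o ⁻¹' {b})) = w i b := fun i b => by rw [hw]
    have e' : ∀ b, ν.real (Prod.snd ⁻¹' (o ⁻¹' {b})) = r b := fun b => by rw [hr]
    simp only [e, e', ← ha']
    rw [Finset.sum_comm]
    refine Finset.sum_congr rfl fun b _ => ?_
    have : negMulLog (r b) = ∑ i, w i b * (- Real.log (r b)) := by
      rw [← Finset.sum_mul, hwr, negMulLog]; ring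
    rw [this, ← Finset.sum_sub_distrib]
    refine Finset.sum_congr rfl fun i _ => ?_
    have e3 : a i * negMulLog (ψ b i) = - (w i b * Real.log (ψ b i)) := by
      rw [negMulLog, ← haψ b i]; ring
    rw [e3]
    rcases (hw0 i b).eq_or_lt with h0 | h0
    · rw [← h0]; simp
    · have hapos := h0.trans_le (hwle i b)
      have hrpos := h0.trans_le (hwler i b)
      have : ψ b i = w i b / a i := by rw [← haψ b i]; field_simp
      rw [this, Real.log_div h0.ne' hapos.ne', Real.log_div h0.ne' (mul_pos hapos hrpos).ne',
        Real.log_mul hapos.ne' hrpos.ne']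
      ring
  -- cost part
  have hc1 : ∀ b, ∫ x, ψ b (p x) * cost T ε (Finset.range m) (L b) x ∂μ ≤ ∑ i, w i b * D i b := by
    intro b
    have : ∑ i, w i b * D i b = ∫ x, ψ b (p x) * D (p x) b ∂μ := by
      rw [int_fin μ hp (fun i => ψ b i * D i b)]
      refine Finset.sum_congr rfl fun i _ => ?_
      rw [← haψ b i, ha]; ring
    rw [this]
    refine integral_mono (hk.int_cost μ hT ε _ _ b) ?_ fun x =>
      mul_le_mul_of_nonneg_left (hcD b x) (hψ0 b _)
    have hmm : Measurable fun x => ψ b (p x) * D (p x) b :=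
      (measurable_of_finite fun i => ψ b i * D i b).comp hp
    obtain ⟨C, hC⟩ := (Set.finite_range fun i => ψ b i * D i b).bddAbove
    exact integrable_of_bdd hmm (C := C) (fun x => mul_nonneg (hψ0 b _) (hD0 _ _))
      fun x => hC ⟨p x, rfl⟩
  have hc2 : ∑ b, ∑ i, w i b * D i b ≤ s * m := by
    have hpo : Measurable fun z : X × (Fin m → X) => (p z.1, o z.2) :=
      (hp.comp measurable_fst).prodMk (ho.comp measurable_snd)
    have e1 : ∑ b, ∑ i, w i b * D i b = ∫ z, D (p z.1) (o z.2) ∂ν := by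
      rw [int_fin ν hpo (fun c => D c.1 c.2), Fintype.sum_prod_type, Finset.sum_comm]
      refine Finset.sum_congr rfl fun i _ => Finset.sum_congr rfl fun b _ => ?_
      have hse : (fun z : X × (Fin m → X) => (p z.1, o z.2)) ⁻¹' {(i, b)} =
          Prod.fst ⁻¹' (p ⁻¹' {i}) ∩ Prod.snd ⁻¹' (o ⁻¹' {b}) := by
        ext z; simp
      rw [hse, hw]
    have hint : Integrable (fun z : X × (Fin m → X) => D (p z.1) (o z.2)) ν := by
      obtain ⟨C, hC⟩ := (Set.finite_range fun c : Fin K × Fin M => D c.1 c.2).bddAbove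
      exact integrable_of_bdd ((measurable_of_finite fun c : Fin K × Fin M => D c.1 c.2).comp hpo) (C := C)
        (fun z => hD0 _ _) fun z => hC ⟨(p z.1, o z.2), rfl⟩
    have hsm : 0 < s * m := mul_pos hs (by exact_mod_cast hm)
    have e2 : ENNReal.ofReal (∫ z, D (p z.1) (o z.2) ∂ν) ≤ ENNReal.ofReal (s * m) := by
      rw [ofReal_integral_eq_lintegral_ofReal hint (Eventually.of_forall fun z => hD0 _ _)]
      refine le_trans (lintegral_mono_ae ?_) hdist.le
      filter_upwards [hq] with z hz
      have := hDN (o z.2) z.1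
      rw [hz] at this
      rw [← ENNReal.ofReal_natCast]
      exact ENNReal.ofReal_le_ofReal this
    rw [e1]
    exact (ENNReal.ofReal_le_ofReal_iff hsm.le).1 e2
  unfold J
  simp only [i1, i2]
  rw [Finset.sum_add_distrib, ← Finset.mul_sum]
  refine add_le_add hinfo (mul_le_mul_of_nonneg_left ?_ hθ)
  exact (Finset.sum_le_sum fun b _ => hc1 b).trans hc2

lemma CR_le_RS {T : X → X} (hT : Continuous T) {ε θ s : ℝ} (hε : 0 < ε) (hθ : 0 ≤ θ) (hs : 0 < s)
    (μ : ProbabilityMeasure X) :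
    ENNReal.ofReal (CR T ε θ μ - θ * s) ≤ RDistLInftyS T (μ : Measure X) ε s := by
  classical
  unfold RDistLInftyS
  refine le_iInf fun m => le_iInf fun hm => le_iInf fun ν => le_iInf fun hνp => le_iInf fun hν =>
    le_iInf fun hS => le_iInf fun hdist => ?_
  obtain ⟨S, hS⟩ := hS
  have hX : Nonempty X := nonempty_of_isProbabilityMeasure (μ : Measure X)
  have hm0 : (m : ℝ≥0∞) ≠ 0 := by exact_mod_cast hm.ne'
  rw [ENNReal.le_div_iff_mul_le (Or.inl hm0) (Or.inl (ENNReal.natCast_ne_top m))]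
  rcases eq_or_ne (mutualInfo ν Prod.fst Prod.snd) ⊤ with htop | htop
  · rw [htop]; exact le_top
  obtain ⟨K, p, hp, hpd⟩ := exists_color hT m hε
  let F : Finset (Fin m → X) := Fintype.piFinset fun _ => S
  let e : Option F ≃ Fin (Fintype.card (Option F)) := Fintype.equivFin _
  let o : (Fin m → X) → Fin (Fintype.card (Option F)) := fun y => e (if h : y ∈ F then some ⟨y, h⟩ else none)
  let q : Fin (Fintype.card (Option F)) → Fin m → X := fun b =>
    (e.symm b).elim (fun _ => Classical.arbitrary X) fun y => y.1
  have hqo : ∀ y ∈ F, q (o y) = y := by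
    intro y hy
    simp [q, o, hy]
  have ho : Measurable o := by
    refine measurable_to_countable' fun b => ?_
    rcases hb : e.symm b with _ | y
    · have : o ⁻¹' {b} = (F : Set (Fin m → X))ᶜ := by
        ext y
        rw [Equiv.symm_apply_eq] at hb
        simp only [o, mem_preimage, mem_singleton_iff, hb, e.apply_eq_iff_eq, mem_compl_iff, Finset.mem_coe]
        by_cases h : y ∈ F <;> simp [h]
      rw [this]
      exact F.measurableSet.compl
    · have : o ⁻¹' {b} = {y.1} := by
        ext z
        rw [Equiv.symm_apply_eq] at hb
        simp only [o, mem_preimage, mem_singleton_iff, hb, e.apply_eq_iff_eq]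
        by_cases h : z ∈ F
        · simp [h, Subtype.ext_iff]
        · simp only [h, dite_false, reduceCtorEq, false_iff]
          rintro rfl
          exact h y.2
      rw [this]
      exact measurableSet_singleton _
  have hq : ∀ᵐ z ∂ν, q (o z.2) = z.2 := by
    have hms : MeasurableSet {z : X × (Fin m → X) | ∀ k, z.2 k ∈ S} := by
      have : {z : X × (Fin m → X) | ∀ k, z.2 k ∈ S} = Prod.snd ⁻¹' (F : Set (Fin m → X)) := by
        ext z; simp [F]
      rw [this]
      exact measurable_snd F.measurableSet
    have h0 := (prob_compl_eq_zero_iff hms).2 hS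
    have h1 : ∀ᵐ z ∂ν, z ∈ {z : X × (Fin m → X) | ∀ k, z.2 k ∈ S} := h0
    filter_upwards [h1] with z hz
    exact hqo _ (Fintype.mem_piFinset.2 hz)
  have hA := ach_of_label hT hε hθ hs hm hν hp hpd ho hq hdist
    (I := (mutualInfo ν Prod.fst Prod.snd).toReal) ENNReal.toReal_nonneg
    (by rw [ENNReal.ofReal_toReal htop])
  have hm' : (0 : ℝ) < m := by exact_mod_cast hm
  have hC : CR T ε θ μ ≤ ((mutualInfo ν Prod.fst Prod.snd).toReal + θ * (s * m)) / m :=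
    csInf_le (SR_bdd hθ μ) ⟨m, hm, by rw [mul_div_cancel₀ _ hm'.ne']; exact hA⟩
  rw [le_div_iff₀ hm'] at hC
  rw [← ENNReal.ofReal_natCast, ← ENNReal.ofReal_mul' hm'.le]
  rw [ENNReal.ofReal_le_iff_le_toReal htop]
  nlinarith

end
end MMDP

namespace MMDP
set_option linter.unusedSectionVars false
open Real (negMulLog)
section

lemma part_sum {Ω A : Type*} [MeasurableSpace Ω] [MeasurableSpace A] (P : Measure Ω) [IsFiniteMeasure P]
    {ξ : Ω → A} (hξ : Measurable ξ) {p : Finset (Set A)} (hp : IsFinPartition p) {V : Set Ω}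
    (hV : MeasurableSet V) : ∑ s ∈ p, P.real (ξ ⁻¹' s ∩ V) = P.real V := by
  obtain ⟨h1, h2, h3⟩ := hp
  rw [← measureReal_biUnion_finset]
  · congr 1
    ext ω
    simp only [mem_iUnion, mem_inter_iff, mem_preimage, exists_prop]
    constructor
    · rintro ⟨s, -, -, h⟩; exact h
    · intro h
      obtain ⟨s, hs, hx⟩ : ξ ω ∈ ⋃₀ (p : Set (Set A)) := by rw [h3]; trivial
      exact ⟨s, hs, hx, h⟩
  · intro s hs t ht hst
    exact ((h2 s hs t ht hst).preimage ξ).mono inter_subset_left inter_subset_left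
  · intro s hs
    exact (hξ (h1 s hs)).inter hV

lemma mutualInfo_le {Ω A B : Type*} [MeasurableSpace Ω] [MeasurableSpace A] [MeasurableSpace B]
    (P : Measure Ω) [IsProbabilityMeasure P] {ξ : Ω → A} (hξ : Measurable ξ) {η : Ω → B}
    (hη : Measurable η) (F : Finset B) (hF : ∀ᵐ ω ∂P, η ω ∈ F) :
    mutualInfo P ξ η ≤ ENNReal.ofReal (Real.log F.card) := by
  classical
  unfold mutualInfo
  refine iSup_le fun p => iSup_le fun hp => iSup_le fun q => iSup_le fun hq => ?_
  refine ENNReal.ofReal_le_ofReal ?_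
  have hFne : F.Nonempty := by
    obtain ⟨ω, hω⟩ := hF.exists
    exact ⟨_, hω⟩
  have hN : (0 : ℝ) < F.card := by exact_mod_cast hFne.card_pos
  have hsum : ∑ t ∈ q, P.real (η ⁻¹' t) = 1 := by
    have := part_sum P hη hq MeasurableSet.univ
    simpa using this
  obtain ⟨q', hq'⟩ : ∃ q' : Finset (Set B), q' = q.filter fun t => 0 < P.real (η ⁻¹' t) := ⟨_, rfl⟩
  have hcard : q'.card ≤ F.card := by
    have hex : ∀ t ∈ q', ∃ y ∈ F, y ∈ t := by
      intro t ht
      rw [hq', Finset.mem_filter] at ht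
      by_contra hcon
      push Not at hcon
      have : P (η ⁻¹' t) = 0 := by
        refine measure_mono_null ?_ hF
        intro ω hω h
        exact hcon _ h hω
      have h2 := ht.2
      rw [measureReal_def, this] at h2
      simp at h2
    have hBn : Nonempty B := ⟨hFne.choose⟩
    choose! y hy1 hy2 using hex
    refine Finset.card_le_card_of_injOn y (fun t ht => hy1 t ht) ?_
    intro t ht t' ht' h
    by_contra hne
    have a1 := (Finset.mem_filter.1 (hq' ▸ (Finset.mem_coe.1 ht))).1
    have a2 := (Finset.mem_filter.1 (hq' ▸ (Finset.mem_coe.1 ht'))).1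
    exact (Set.disjoint_left.1 (hq.2.1 t a1 t' a2 hne)) (hy2 t ht) (h ▸ hy2 t' ht')
  calc _ ≤ ∑ s ∈ p, ∑ t ∈ q, P.real (ξ ⁻¹' s ∩ η ⁻¹' t) * (- Real.log (P.real (η ⁻¹' t))) := by
        refine Finset.sum_le_sum fun s _ => Finset.sum_le_sum fun t _ => ?_
        change P.real (ξ ⁻¹' s ∩ η ⁻¹' t) * Real.log (P.real (ξ ⁻¹' s ∩ η ⁻¹' t) /
          (P.real (ξ ⁻¹' s) * P.real (η ⁻¹' t))) ≤ _
        have h0 : 0 ≤ P.real (ξ ⁻¹' s ∩ η ⁻¹' t) := measureReal_nonneg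
        have h1 : P.real (ξ ⁻¹' s ∩ η ⁻¹' t) ≤ P.real (ξ ⁻¹' s) := measureReal_mono inter_subset_left
        have h2 : P.real (ξ ⁻¹' s ∩ η ⁻¹' t) ≤ P.real (η ⁻¹' t) := measureReal_mono inter_subset_right
        rcases h0.eq_or_lt with h | h
        · rw [← h]; simp
        · refine mul_le_mul_of_nonneg_left ?_ h0
          have p1 := h.trans_le h1
          have p2 := h.trans_le h2
          rw [Real.log_div h.ne' (mul_pos p1 p2).ne', Real.log_mul p1.ne' p2.ne']
          have := Real.log_le_log h h1
          linarith
    _ = ∑ t ∈ q, P.real (η ⁻¹' t) * (- Real.log (P.real (η ⁻¹' t))) := by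
        rw [Finset.sum_comm]
        refine Finset.sum_congr rfl fun t ht => ?_
        rw [← Finset.sum_mul, part_sum P hξ hp (hη (hq.1 t ht))]
    _ ≤ ∑ t ∈ q, (P.real (η ⁻¹' t) * (Real.log F.card - 1) +
          if 0 < P.real (η ⁻¹' t) then (F.card : ℝ)⁻¹ else 0) := by
        refine Finset.sum_le_sum fun t _ => ?_
        have h0 : 0 ≤ P.real (η ⁻¹' t) := measureReal_nonneg
        obtain ⟨x, hx⟩ : ∃ x, x = P.real (η ⁻¹' t) := ⟨_, rfl⟩
        rw [← hx] at h0 ⊢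
        rcases h0.eq_or_lt with h | h
        · rw [← h]; simp
        · rw [if_pos h]
          have := Real.log_le_sub_one_of_pos (x := 1 / (x * F.card)) (by positivity)
          rw [Real.log_div one_ne_zero (by positivity), Real.log_one, Real.log_mul h.ne' hN.ne'] at this
          have h3 := mul_le_mul_of_nonneg_left this h0
          have e : x * (1 / (x * F.card) - 1) = (F.card : ℝ)⁻¹ - x := by field_simp
          rw [e] at h3
          nlinarith
    _ = (Real.log F.card - 1) + q'.card * (F.card : ℝ)⁻¹ := by
        rw [Finset.sum_add_distrib, ← Finset.sum_mul, hsum, one_mul, ← Finset.sum_filter, ← hq']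
        simp
    _ ≤ Real.log F.card := by
        have : (q'.card : ℝ) * (F.card : ℝ)⁻¹ ≤ 1 := by
          rw [← div_eq_mul_inv, div_le_one hN]
          exact_mod_cast hcard
        linarith

variable {X : Type*} [MetricSpace X] [CompactSpace X] [MeasurableSpace X] [BorelSpace X]

lemma exists_span {T : X → X} (hT : Continuous T) {n : ℕ} (hn : 0 < n) {ε : ℝ} (hε : 0 < ε) :
    ∃ E : Finset X, E.card = spanNum T n ε Set.univ ∧
      ∀ z, ∃ y ∈ E, ∀ k < n, dist (T^[k] z) (T^[k] y) < ε := by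
  classical
  obtain ⟨K, c, -, hc⟩ := exists_color hT n hε
  have : Nonempty (Fin n) := ⟨⟨0, hn⟩⟩
  have hne : {k | ∃ E : Finset X, E.card = k ∧ ∀ z ∈ (Set.univ : Set X), ∃ y ∈ E, bowenDist T n z y < ε}.Nonempty := by
    rcases isEmpty_or_nonempty X with hX | hX
    · exact ⟨0, ∅, rfl, fun z => (hX.false z).elim⟩
    refine ⟨_, Finset.univ.image (fun i => Function.invFun c i), rfl, fun z _ => ?_⟩
    refine ⟨Function.invFun c (c z), by simp, ?_⟩
    have hcz : c z = c (Function.invFun c (c z)) := (Function.invFun_eq ⟨z, rfl⟩).symm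
    obtain ⟨i, hi⟩ := exists_eq_ciSup_of_finite
      (f := fun j : Fin n => dist (T^[(j : ℕ)] z) (T^[(j : ℕ)] (Function.invFun c (c z))))
    rw [bowenDist, ← hi]
    exact hc _ _ hcz i i.2
  obtain ⟨E, hE, hs⟩ := Nat.sInf_mem hne
  refine ⟨E, hE, fun z => ?_⟩
  obtain ⟨y, hy, hd⟩ := hs z trivial
  refine ⟨y, hy, fun k hk => lt_of_le_of_lt ?_ hd⟩
  exact le_ciSup (f := fun j : Fin n => dist (T^[(j : ℕ)] z) (T^[(j : ℕ)] y))
    (Set.finite_range _).bddAbove ⟨k, hk⟩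

lemma RS_le {T : X → X} (hT : Continuous T) {n : ℕ} (hn : 0 < n) {ε s : ℝ} (hε : 0 < ε) (hs : 0 < s)
    (μ : Measure X) [IsProbabilityMeasure μ] :
    RDistLInftyS T μ ε s ≤ ENNReal.ofReal (Real.log (spanNum T n ε Set.univ)) / (n : ℝ≥0∞) := by
  classical
  have hX : Nonempty X := nonempty_of_isProbabilityMeasure μ
  obtain ⟨E, hE, hsp⟩ := exists_span hT hn hε
  have hit : ∀ k, Continuous (T^[k]) := fun k => hT.iterate k
  obtain ⟨y, hy⟩ : ∃ y : ℕ → X, y = fun i => if h : i < E.card then (E.equivFin.symm ⟨i, h⟩ : X)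
    else Classical.arbitrary X := ⟨_, rfl⟩
  have hyE : ∀ i < E.card, y i ∈ E := by
    intro i hi
    rw [hy]
    simp only [hi, dite_true]
    exact (E.equivFin.symm ⟨i, hi⟩).2
  have hex : ∀ x, ∃ i, i < E.card ∧ ∀ k < n, dist (T^[k] x) (T^[k] (y i)) < ε := by
    intro x
    obtain ⟨z, hz, hd⟩ := hsp x
    refine ⟨E.equivFin ⟨z, hz⟩, (E.equivFin ⟨z, hz⟩).2, ?_⟩
    have : y (E.equivFin ⟨z, hz⟩) = z := by
      rw [hy]; simp
    rw [this]; exact hd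
  obtain ⟨N, hN⟩ : ∃ N : X → ℕ, N = fun x => Nat.find (hex x) := ⟨_, rfl⟩
  have hNm : Measurable N := by
    rw [hN]
    refine measurable_find hex fun i => ?_
    refine MeasurableSet.inter (MeasurableSet.const _) ?_
    have : {x | ∀ k < n, dist (T^[k] x) (T^[k] (y i)) < ε} =
        ⋂ k ∈ Finset.range n, {x | dist (T^[k] x) (T^[k] (y i)) < ε} := by
      ext x; simp
    change MeasurableSet {x | ∀ k < n, dist (T^[k] x) (T^[k] (y i)) < ε}
    rw [this]
    refine Finset.measurableSet_biInter _ fun k _ => ?_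
    exact (isOpen_lt ((hit k).dist continuous_const) continuous_const).measurableSet
  have hNs : ∀ x, N x < E.card ∧ ∀ k < n, dist (T^[k] x) (T^[k] (y (N x))) < ε := by
    intro x; rw [hN]; exact Nat.find_spec (hex x)
  obtain ⟨orb, horb⟩ : ∃ orb : X → Fin n → X, orb = fun (x : X) (k : Fin n) => T^[(k : ℕ)] x := ⟨_, rfl⟩
  obtain ⟨G, hG⟩ : ∃ G : X → X × (Fin n → X), G = fun x => (x, orb (y (N x))) := ⟨_, rfl⟩
  have hGm : Measurable G := by
    rw [hG]
    exact measurable_id.prodMk ((measurable_from_nat (f := fun i => orb (y i))).comp hNm)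
  have hpr : IsProbabilityMeasure (μ.map G) := Measure.isProbabilityMeasure_map hGm.aemeasurable
  obtain ⟨F, hF⟩ : ∃ F : Finset (Fin n → X), F = E.image orb := ⟨_, rfl⟩
  have hGF : ∀ x, (G x).2 ∈ F := by
    intro x
    rw [hG, hF]
    exact Finset.mem_image_of_mem _ (hyE _ (hNs x).1)
  unfold RDistLInftyS
  refine iInf_le_of_le n (iInf_le_of_le hn (iInf_le_of_le (μ.map G) (iInf_le_of_le hpr
    (iInf_le_of_le ?_ (iInf_le_of_le ?_ (iInf_le_of_le ?_ ?_))))))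
  · rw [Measure.map_map measurable_fst hGm]
    have : Prod.fst ∘ G = id := by rw [hG]; rfl
    rw [this, Measure.map_id]
  · refine ⟨F.biUnion fun f => Finset.univ.image f, ?_⟩
    have hmem : ∀ x, G x ∈ {p : X × (Fin n → X) | ∀ k, p.2 k ∈ F.biUnion fun f => Finset.univ.image f} := by
      intro x k
      rw [Finset.mem_biUnion]
      exact ⟨_, hGF x, by simp⟩
    have hms : MeasurableSet {p : X × (Fin n → X) | ∀ k, p.2 k ∈ F.biUnion fun f => Finset.univ.image f} := by
      have : {p : X × (Fin n → X) | ∀ k, p.2 k ∈ F.biUnion fun f => Finset.univ.image f} =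
        Prod.snd ⁻¹' ((Fintype.piFinset fun _ => F.biUnion fun f => Finset.univ.image f : Finset (Fin n → X)) : Set (Fin n → X)) := by
        ext z; simp
      rw [this]
      exact measurable_snd (Finset.measurableSet _)
    rw [Measure.map_apply hGm hms, ← measure_univ (μ := μ)]
    congr 1
    exact eq_univ_of_forall fun x => hmem x
  · refine lt_of_le_of_lt (lintegral_map_le _ _) ?_
    have : ∀ x, (Nat.card {k : Fin n // ε ≤ dist (T^[(k : ℕ)] (G x).1) ((G x).2 k)} : ℝ≥0∞) = 0 := by
      intro x
      have : IsEmpty {k : Fin n // ε ≤ dist (T^[(k : ℕ)] (G x).1) ((G x).2 k)} := by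
        refine ⟨fun k => ?_⟩
        have h1 := (hNs x).2 k.1 k.1.2
        obtain ⟨k, h2⟩ := k
        have e1 : (G x).1 = x := by rw [hG]
        have e2 : (G x).2 k = T^[(k : ℕ)] (y (N x)) := by rw [hG, horb]
        rw [e1, e2] at h2
        exact absurd h1 (not_lt.2 h2)
      simp
    simp only [this, lintegral_zero]
    have : (0 : ℝ) < n := by exact_mod_cast hn
    positivity
  · refine ENNReal.div_le_div_right ?_ _
    refine (mutualInfo_le (μ.map G) measurable_fst measurable_snd F ?_).trans ?_
    · have hms : MeasurableSet {z : X × (Fin n → X) | z.2 ∈ F} := measurable_snd F.measurableSet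
      rw [ae_map_iff hGm.aemeasurable hms]
      exact Eventually.of_forall hGF
    · refine ENNReal.ofReal_le_ofReal ?_
      have hFne : 0 < F.card := Finset.card_pos.2 ⟨_, hGF (Classical.arbitrary X)⟩
      refine Real.log_le_log (by exact_mod_cast hFne) ?_
      rw [← hE, hF]
      exact_mod_cast Finset.card_image_le

lemma R_le {T : X → X} (hT : Continuous T) {ε : ℝ} (hε : 0 < ε)
    (μ : Measure X) [IsProbabilityMeasure μ] : RDistLInfty T μ ε ≤ spanGrowth T ε := by
  refine iSup_le fun s => iSup_le fun hs => ?_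
  rw [← limsup_const (f := (atTop : Filter ℕ)) (RDistLInftyS T μ ε s)]
  refine limsup_le_limsup ?_
  filter_upwards [eventually_gt_atTop 0] with n hn
  exact RS_le hT hn hε hs μ

lemma span_le_sup {T : X → X} (hT : Continuous T) {ε : ℝ} (hε : 0 < ε) :
    spanGrowth T (6 * ε) ≤ ⨆ (μ : Measure X) (_ : IsProbabilityMeasure μ) (_ : Ergodic T μ), RDistLInfty T μ ε := by
  rcases isEmpty_or_nonempty X with hX | hX
  · have : spanGrowth T (6 * ε) = 0 := by
      have h0 : ∀ n, spanNum T n (6 * ε) Set.univ = 0 := by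
        intro n
        exact Nat.sInf_eq_zero.2 (Or.inl ⟨∅, rfl, fun z => (hX.false z).elim⟩)
      simp [spanGrowth, h0]
    rw [this]; exact zero_le
  obtain ⟨K, c, -, hc⟩ := exists_color hT 1 (r := 6 * ε) (by linarith)
  have hc' : ∀ x y, c x = c y → dist x y < 6 * ε := fun x y h => by simpa using hc x y h 0 one_pos
  refine le_of_forall_lt fun b hb => ?_
  obtain ⟨b', hbb, hb'⟩ := exists_between hb
  have hb't : b' ≠ ⊤ := hb'.ne_top
  have hbt : b ≠ ⊤ := hbb.ne_top
  have hlt : b.toReal < b'.toReal := (ENNReal.toReal_lt_toReal hbt hb't).2 hbb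
  obtain ⟨a, ha⟩ : ∃ a, a = b'.toReal := ⟨_, rfl⟩
  obtain ⟨δ, hδ⟩ : ∃ δ, δ = (a - b.toReal) / 5 := ⟨_, rfl⟩
  have hδ0 : 0 < δ := by rw [hδ]; rw [← ha] at hlt; linarith
  have htend : Tendsto (fun θ : ℝ => Real.log (1 + K * Real.exp (-θ))) atTop (𝓝 0) := by
    have h1 : Tendsto (fun θ : ℝ => 1 + K * Real.exp (-θ)) atTop (𝓝 (1 + K * 0)) :=
      (Real.tendsto_exp_neg_atTop_nhds_zero.const_mul _).const_add _
    have h2 := h1.log (by simp)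
    simpa using h2
  obtain ⟨θ, hθ1, hθ0⟩ := ((htend.eventually (gt_mem_nhds hδ0)).and (eventually_gt_atTop 0)).exists
  obtain ⟨μ₀, hμ₀, hm⟩ := exists_inv hT hε hθ0.le c hc' (a := a) (ha ▸ ENNReal.toReal_nonneg)
    (by rw [ha, ENNReal.ofReal_toReal hb't]; exact hb')
  have hCR : a - δ ≤ CR T ε θ μ₀ := by
    refine le_csInf (SR_nonempty hT hθ0.le μ₀) ?_
    rintro r ⟨m, hm0, hA⟩
    have h1 := hm m hm0 _ hA
    have hm' : (0 : ℝ) < m := by exact_mod_cast hm0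
    have := le_of_mul_le_mul_left h1 hm'
    linarith
  obtain ⟨μ, hμ, hC⟩ := exists_erg hT hθ0.le (ε := ε) μ₀ hμ₀ hδ0
  have h2 := CR_le_RS hT hε hθ0.le (s := δ / θ) (by positivity) μ
  have h3 : b < ENNReal.ofReal (CR T ε θ μ - θ * (δ / θ)) := by
    rw [ENNReal.lt_ofReal_iff_toReal_lt hbt, mul_div_cancel₀ _ hθ0.ne']
    linarith
  refine h3.trans_le (h2.trans ?_)
  refine le_iSup_of_le (μ : Measure X) (le_iSup_of_le inferInstance (le_iSup_of_le hμ ?_))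
  exact le_iSup_of_le (δ / θ) (le_iSup_of_le (by positivity) le_rfl)

lemma limsup_scale {f g : ℝ → ℝ≥0∞} (h1 : ∀ ε, 0 < ε → g ε ≤ f ε) (h2 : ∀ ε, 0 < ε → f (6 * ε) ≤ g ε) :
    limsup (fun ε : ℝ => f ε / ENNReal.ofReal (Real.log (1 / ε))) (𝓝[>] 0) =
      limsup (fun ε : ℝ => g ε / ENNReal.ofReal (Real.log (1 / ε))) (𝓝[>] 0) := by
  refine le_antisymm ?_ ?_
  swap
  · refine limsup_le_limsup ?_
    filter_upwards [self_mem_nhdsWithin] with ε hε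
    exact ENNReal.div_le_div_right (h1 ε hε) _
  obtain ⟨h, hh⟩ : ∃ h : ℝ → ℝ≥0∞, h = fun ε : ℝ => g ε / ENNReal.ofReal (Real.log (1 / ε)) := ⟨_, rfl⟩
  rw [← hh]
  have key : ∀ κ : ℝ, 1 < κ → limsup (fun ε : ℝ => f ε / ENNReal.ofReal (Real.log (1 / ε))) (𝓝[>] 0) ≤
      ENNReal.ofReal κ * limsup h (𝓝[>] 0) := by
    intro κ hκ
    have hu : Tendsto (fun ε : ℝ => ε / 6) (𝓝[>] 0) (𝓝[>] 0) := by
      refine tendsto_nhdsWithin_iff.2 ⟨?_, ?_⟩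
      · have : Tendsto (fun ε : ℝ => ε / 6) (𝓝 0) (𝓝 (0 / 6)) := tendsto_id.div_const 6
        rw [zero_div] at this
        exact this.mono_left nhdsWithin_le_nhds
      · filter_upwards [self_mem_nhdsWithin] with ε hε
        exact div_pos (mem_Ioi.1 hε) (by norm_num : (0 : ℝ) < 6)
    have hlog : ∀ᶠ ε : ℝ in 𝓝[>] 0, Real.log 6 / (κ - 1) + 1 < Real.log (1 / ε) := by
      have : Tendsto (fun ε : ℝ => Real.log (1 / ε)) (𝓝[>] 0) atTop := by
        simp only [one_div]
        exact Real.tendsto_log_atTop.comp tendsto_inv_nhdsGT_zero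
      exact this.eventually_gt_atTop _
    calc _ ≤ limsup (fun ε : ℝ => ENNReal.ofReal κ * h (ε / 6)) (𝓝[>] 0) := by
          refine limsup_le_limsup ?_
          filter_upwards [hlog, self_mem_nhdsWithin] with ε hl hε
          have hε' : 0 < ε := hε
          have hg := h2 (ε / 6) (by positivity)
          rw [mul_div_cancel₀ _ (by norm_num : (6 : ℝ) ≠ 0)] at hg
          rw [hh]
          dsimp only
          have l6 : 0 < Real.log 6 := Real.log_pos (by norm_num)
          have hk : 0 < κ - 1 := by linarith
          have q1 : 0 < Real.log 6 / (κ - 1) := by positivity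
          have hlp : 0 < Real.log (1 / ε) := by linarith
          have e1 : Real.log (1 / (ε / 6)) = Real.log 6 + Real.log (1 / ε) := by
            rw [← Real.log_mul (by norm_num) (by positivity)]
            congr 1; field_simp
          have hle : Real.log (1 / (ε / 6)) ≤ κ * Real.log (1 / ε) := by
            rw [e1]
            have : Real.log 6 / (κ - 1) < Real.log (1 / ε) := by linarith
            rw [div_lt_iff₀ hk] at this
            linarith
          have hpos : 0 < Real.log (1 / (ε / 6)) := by rw [e1]; linarith
          have a1 : ENNReal.ofReal (Real.log (1 / ε)) ≠ 0 := by simpa using hlp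
          have b1 : ENNReal.ofReal (Real.log (1 / (ε / 6))) ≠ 0 := by simpa using hpos
          rw [ENNReal.div_le_iff a1 ENNReal.ofReal_ne_top]
          calc f ε ≤ g (ε / 6) := hg
            _ = g (ε / 6) / ENNReal.ofReal (Real.log (1 / (ε / 6))) * ENNReal.ofReal (Real.log (1 / (ε / 6))) :=
                (ENNReal.div_mul_cancel b1 ENNReal.ofReal_ne_top).symm
            _ ≤ g (ε / 6) / ENNReal.ofReal (Real.log (1 / (ε / 6))) * (ENNReal.ofReal κ * ENNReal.ofReal (Real.log (1 / ε))) := by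
                rw [← ENNReal.ofReal_mul (by linarith)]
                gcongr
            _ = _ := by ring
      _ = ENNReal.ofReal κ * limsup (fun ε : ℝ => h (ε / 6)) (𝓝[>] 0) :=
          ENNReal.limsup_const_mul_of_ne_top ENNReal.ofReal_ne_top
      _ ≤ ENNReal.ofReal κ * limsup h (𝓝[>] 0) := by
          gcongr
          exact limsup_le_limsup_of_le (u := h) hu
  have ht : Tendsto (fun κ : ℝ => ENNReal.ofReal κ * limsup h (𝓝[>] 0)) (𝓝[>] 1)
      (𝓝 (ENNReal.ofReal 1 * limsup h (𝓝[>] 0))) := by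
    refine ENNReal.Tendsto.mul_const ?_ (Or.inl (by simp))
    exact (ENNReal.continuous_ofReal.tendsto 1).mono_left nhdsWithin_le_nhds
  rw [ENNReal.ofReal_one, one_mul] at ht
  refine ge_of_tendsto ht ?_
  filter_upwards [self_mem_nhdsWithin] with κ hκ
  exact key κ hκ

end
end MMDP

/-- Theorem 1.1 (upper part): the variational principle for the upper metric mean dimension
in terms of the `L^∞` rate distortion function ranges only over ergodic measures. -/
theorem stmt0 {X : Type*} [MetricSpace X] [CompactSpace X] [MeasurableSpace X] [BorelSpace X]
    (T : X → X) (hT : Continuous T) :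
    mdimMUpper T = Filter.limsup (fun ε : ℝ =>
      (⨆ (μ : Measure X) (_ : IsProbabilityMeasure μ) (_ : Ergodic T μ), RDistLInfty T μ ε)
        / ENNReal.ofReal (Real.log (1 / ε))) (nhdsWithin 0 (Set.Ioi 0)) := by
  unfold mdimMUpper
  refine MMDP.limsup_scale (f := fun ε => spanGrowth T ε) (fun ε hε => ?_) (fun ε hε => MMDP.span_le_sup hT hε)
  exact iSup_le fun μ => iSup_le fun hμ => iSup_le fun _ => MMDP.R_le hT hε μ
end
end

section
/- Let (X,T) be a topological dynamical system with a compatible metric d. Then for every T-invariant Borel probability measure μ, the lower L¹ rate distortion dimension is bounded by the lower Rényi information dimension: liminf_{ε→0} R_{μ,1}(ε)/log(1/ε) ≤ liminf_{ε→0} (1/log(1/ε)) · inf{ h_μ(T,P) : P a finite Borel partition of X with diam P ≤ ε }. -/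
open Filter MeasureTheory Set
open scoped ENNReal Topology

noncomputable section

open MMD

theorem aux_sum_part {Y : Type*} [MeasurableSpace Y] (μ : Measure Y) [IsProbabilityMeasure μ]
    (p : Finset (Set Y)) (hp : IsFinPartition p) (B : Set Y) (hB : MeasurableSet B) :
    ∑ s ∈ p, (μ (s ∩ B)).toReal = (μ B).toReal := by
  obtain ⟨h1, h2, h3⟩ := hp
  rw [← ENNReal.toReal_sum (fun _ _ => measure_ne_top _ _),
    ← measure_biUnion_finset (μ := μ) (s := p) (f := fun s => s ∩ B)]
  · congr 2
    rw [← Set.iUnion₂_inter]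
    rw [Set.sUnion_eq_biUnion] at h3
    simp only [Finset.mem_coe] at h3
    rw [h3, Set.univ_inter]
  · intro s hs t ht hst
    exact (h2 s hs t ht hst).mono Set.inter_subset_left Set.inter_subset_left
  · intro s hs
    exact (h1 s hs).inter hB

theorem aux_log_le {a b c : ℝ} (ha : 0 ≤ a) (hab : a ≤ b) (hac : a ≤ c) :
    a * Real.log (a / (b * c)) ≤ a * (-Real.log c) := by
  rcases ha.eq_or_lt with h | h
  · simp [← h]
  · have hb := h.trans_le hab
    have hc := h.trans_le hac
    apply mul_le_mul_of_nonneg_left _ ha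
    rw [← Real.log_inv]
    apply Real.log_le_log (by positivity)
    rw [div_le_iff₀ (by positivity)]
    field_simp
    exact hab

theorem aux_joinN {X : Type*} [MeasurableSpace X] (T : X → X) (hT : Measurable T)
    (P : Finset (Set X)) (hP : IsFinPartition P) (n : ℕ) : IsFinPartition (joinN T P n) := by
  obtain ⟨h1, h2, h3⟩ := hP
  have mem : ∀ A, A ∈ joinN T P n ↔ ∃ f : Fin n → Set X, (∀ j, f j ∈ P) ∧
      ⋂ j : Fin n, T^[(j : ℕ)] ⁻¹' f j = A := by
    intro A; simp [joinN]
  refine ⟨?_, ?_, ?_⟩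
  · intro s hs
    obtain ⟨f, hf, rfl⟩ := (mem s).1 hs
    exact MeasurableSet.iInter fun j => (hT.iterate _) (h1 _ (hf j))
  · intro s hs t ht hst
    obtain ⟨f, hf, rfl⟩ := (mem s).1 hs
    obtain ⟨g, hg, rfl⟩ := (mem t).1 ht
    rw [Set.disjoint_left]
    intro x hx hx'
    apply hst
    have : f = g := by
      funext j
      by_contra hne
      exact Set.disjoint_left.1 (h2 _ (hf j) _ (hg j) hne)
        (Set.mem_iInter.1 hx j) (Set.mem_iInter.1 hx' j)
    rw [this]
  · rw [Set.eq_univ_iff_forall] at h3 ⊢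
    intro x
    choose c hc hxc using h3
    exact ⟨_, Finset.mem_coe.2 ((mem _).2 ⟨fun j => c (T^[(j : ℕ)] x), fun j => hc _, rfl⟩),
      Set.mem_iInter.2 fun j => hxc _⟩

theorem aux_info {X B : Type*} [MeasurableSpace X] [MeasurableSpace B] (μ : Measure X)
    [IsProbabilityMeasure μ] (η : X → B) (hη : Measurable η) (J : Finset (Set X))
    (hJ : IsFinPartition J) (hc : ∀ A ∈ J, ∀ x ∈ A, ∀ y ∈ A, η x = η y) :
    mutualInfo (μ.map fun x => (x, η x)) Prod.fst Prod.snd ≤ entP μ J := by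
  unfold mutualInfo
  refine iSup₂_le fun p hp => iSup₂_le fun q hq => ?_
  have hm : Measurable fun x => (x, η x) := measurable_id.prodMk hη
  have nn : ∀ A, 0 ≤ -((μ A).toReal * Real.log ((μ A).toReal)) := by
    intro A
    have := Real.negMulLog_nonneg (x := (μ A).toReal) ENNReal.toReal_nonneg
      (ENNReal.toReal_le_of_le_ofReal zero_le_one (by simpa using prob_le_one))
    simpa [Real.negMulLog] using this
  unfold entP
  rw [← ENNReal.ofReal_sum_of_nonneg (fun A _ => nn A)]
  apply ENNReal.ofReal_le_ofReal
  have e1 : ∀ s ∈ p, ∀ t ∈ q, (μ.map fun x => (x, η x)) (Prod.fst ⁻¹' s ∩ Prod.snd ⁻¹' t)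
      = μ (s ∩ η ⁻¹' t) := by
    intro s hs t ht
    rw [Measure.map_apply hm ((measurable_fst (hp.1 s hs)).inter (measurable_snd (hq.1 t ht)))]
    rfl
  have e2 : ∀ s ∈ p, (μ.map fun x => (x, η x)) (Prod.fst ⁻¹' s) = μ s := by
    intro s hs
    rw [Measure.map_apply hm (measurable_fst (hp.1 s hs))]
    rfl
  have e3 : ∀ t ∈ q, (μ.map fun x => (x, η x)) (Prod.snd ⁻¹' t) = μ (η ⁻¹' t) := by
    intro t ht
    rw [Measure.map_apply hm (measurable_snd (hq.1 t ht))]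
    rfl
  have mono : ∀ {A C : Set X}, A ⊆ C → (μ A).toReal ≤ (μ C).toReal := fun h =>
    ENNReal.toReal_mono (measure_ne_top _ _) (measure_mono h)
  calc _ ≤ ∑ s ∈ p, ∑ t ∈ q, (μ (s ∩ η ⁻¹' t)).toReal * (-Real.log (μ (η ⁻¹' t)).toReal) := by
        refine Finset.sum_le_sum fun s hs => Finset.sum_le_sum fun t ht => ?_
        rw [e1 s hs t ht, e2 s hs, e3 t ht]
        exact aux_log_le ENNReal.toReal_nonneg (mono Set.inter_subset_left)
          (mono Set.inter_subset_right)
    _ = ∑ t ∈ q, (μ (η ⁻¹' t)).toReal * (-Real.log (μ (η ⁻¹' t)).toReal) := by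
        rw [Finset.sum_comm]
        refine Finset.sum_congr rfl fun t ht => ?_
        rw [← Finset.sum_mul, aux_sum_part μ p hp _ (hη (hq.1 t ht))]
    _ = ∑ t ∈ q, ∑ A ∈ J, (μ (A ∩ η ⁻¹' t)).toReal * (-Real.log (μ (η ⁻¹' t)).toReal) := by
        refine Finset.sum_congr rfl fun t ht => ?_
        rw [← Finset.sum_mul, aux_sum_part μ J hJ _ (hη (hq.1 t ht))]
    _ ≤ ∑ t ∈ q, ∑ A ∈ J, -((μ (A ∩ η ⁻¹' t)).toReal * Real.log (μ (A ∩ η ⁻¹' t)).toReal) := by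
        refine Finset.sum_le_sum fun t ht => Finset.sum_le_sum fun A hA => ?_
        have h0 : 0 ≤ (μ (A ∩ η ⁻¹' t)).toReal := ENNReal.toReal_nonneg
        rw [← mul_neg]
        rcases h0.eq_or_lt with h | h
        · simp [← h]
        · exact mul_le_mul_of_nonneg_left
            (neg_le_neg (Real.log_le_log h (mono Set.inter_subset_right))) h0
    _ = ∑ A ∈ J, ∑ t ∈ q, -((μ (A ∩ η ⁻¹' t)).toReal * Real.log (μ (A ∩ η ⁻¹' t)).toReal) :=
        Finset.sum_comm
    _ = _ := by
        refine Finset.sum_congr rfl fun A hA => ?_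
        rcases A.eq_empty_or_nonempty with rfl | ⟨x, hx⟩
        · simp
        · have hu : η x ∈ ⋃₀ (q : Set (Set B)) := by rw [hq.2.2]; trivial
          obtain ⟨t0, ht0, hxt⟩ := hu
          rw [Finset.sum_eq_single t0]
          · have : A ∩ η ⁻¹' t0 = A := by
              apply Set.inter_eq_left.2
              intro y hy
              simpa [hc A hA y hy x hx] using hxt
            rw [this]
          · intro t ht hne
            have : A ∩ η ⁻¹' t = ∅ := by
              rw [Set.eq_empty_iff_forall_notMem]
              rintro y ⟨hy, hyt⟩
              rw [Set.mem_preimage, hc A hA y hy x hx] at hyt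
              exact Set.disjoint_left.1 (hq.2.1 t ht t0 ht0 hne) hyt hxt
            simp [this]
          · intro h; exact absurd ht0 h

theorem aux_main {X : Type*} [MetricSpace X] [CompactSpace X] [MeasurableSpace X] [BorelSpace X]
    (T : X → X) (hT : Continuous T) (μ : Measure X) (hμp : IsProbabilityMeasure μ)
    (ε ε' : ℝ) (hε : 0 < ε) (h : ε < ε') (P : Finset (Set X)) (hP : IsFinPartition P)
    (hd : ∀ s ∈ P, Metric.diam s ≤ ε) (n : ℕ) (hn : 0 < n) :
    RDistL1 T μ ε' ≤ entP μ (joinN T P n) / n := by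
  classical
  obtain ⟨x0⟩ : Nonempty X := nonempty_of_isProbabilityMeasure μ
  have h3 := hP.2.2
  rw [Set.eq_univ_iff_forall] at h3
  choose c hc hxc using h3
  have hcu : ∀ s ∈ P, ∀ x ∈ s, c x = s := by
    intro s hs x hx
    by_contra hne
    exact Set.disjoint_left.1 (hP.2.1 _ (hc x) s hs hne) (hxc x) hx
  let rep : Set X → X := fun s => if hs : s.Nonempty then hs.some else x0
  have hrep : ∀ s : Set X, s.Nonempty → rep s ∈ s := by
    intro s hs
    simp only [rep, dif_pos hs]
    exact hs.some_mem
  let g : X → X := fun x => rep (c x)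
  have hg : Measurable g := by
    intro U hU
    have : g ⁻¹' U = ⋃ s ∈ P.filter (fun s => rep s ∈ U), s := by
      ext x
      simp only [Set.mem_preimage, Set.mem_iUnion, Finset.mem_filter, exists_prop, g]
      constructor
      · intro hx
        exact ⟨c x, ⟨hc x, hx⟩, hxc x⟩
      · rintro ⟨s, ⟨hs, hsU⟩, hx⟩
        rwa [hcu s hs x hx]
    rw [this]
    exact Finset.measurableSet_biUnion _ fun s hs => hP.1 s (Finset.mem_filter.1 hs).1
  have hgd : ∀ x, dist x (g x) ≤ ε := fun x =>
    (Metric.dist_le_diam_of_mem Metric.isBounded_of_compactSpace (hxc x)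
      (hrep _ ⟨x, hxc x⟩)).trans (hd _ (hc x))
  let η : X → Fin n → X := fun x k => g (T^[(k : ℕ)] x)
  have hη : Measurable η :=
    measurable_pi_lambda _ fun k => hg.comp (hT.measurable.iterate _)
  have hm : Measurable fun x => (x, η x) := measurable_id.prodMk hη
  unfold RDistL1
  have hprob : IsProbabilityMeasure (μ.map fun x => (x, η x)) :=
    Measure.isProbabilityMeasure_map hm.aemeasurable
  refine (iInf₂_le n hn).trans <| (iInf₂_le (μ.map fun x => (x, η x)) hprob).trans <|
    (iInf_le _ ?_).trans <| (iInf_le _ ?_).trans <| (iInf_le _ ?_).trans ?_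
  · rw [Measure.map_map measurable_fst hm]
    exact Measure.map_id
  · refine ⟨P.image rep, ?_⟩
    have hms : MeasurableSet {p : X × (Fin n → X) | ∀ k, p.2 k ∈ P.image rep} := by
      rw [Set.setOf_forall]
      refine MeasurableSet.iInter fun k => ?_
      exact ((measurable_pi_apply k).comp measurable_snd) (Finset.measurableSet (P.image rep))
    rw [Measure.map_apply hm hms]
    have : ((fun x => (x, η x)) ⁻¹' {p : X × (Fin n → X) | ∀ k, p.2 k ∈ P.image rep})
        = Set.univ := by
      rw [Set.eq_univ_iff_forall]
      intro x k
      exact Finset.mem_image_of_mem rep (hc _)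
    rw [this, measure_univ]
  · rw [lintegral_map _ hm]
    · calc _ ≤ ∫⁻ _ : X, ENNReal.ofReal (ε * n) ∂μ := by
            refine lintegral_mono fun x => ?_
            calc _ ≤ ∑ k : Fin n, ENNReal.ofReal ε :=
                  Finset.sum_le_sum fun k _ => ENNReal.ofReal_le_ofReal (hgd _)
              _ = ENNReal.ofReal (ε * n) := by
                  rw [Finset.sum_const, Finset.card_univ, Fintype.card_fin, nsmul_eq_mul,
                    mul_comm, ENNReal.ofReal_mul hε.le, ENNReal.ofReal_natCast]
        _ = ENNReal.ofReal (ε * n) := by simp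
        _ < _ := by
            have hn' : (0 : ℝ) < n := by exact_mod_cast hn
            have := mul_lt_mul_of_pos_right h hn'
            exact (ENNReal.ofReal_lt_ofReal_iff ((mul_pos hε hn').trans this)).2 this
    · refine Finset.measurable_sum _ fun k _ => ?_
      refine ENNReal.measurable_ofReal.comp ?_
      exact ((hT.measurable.iterate _).comp measurable_fst).dist
        ((measurable_pi_apply k).comp measurable_snd)
  · refine ENNReal.div_le_div_right ?_ _
    refine aux_info μ η hη _ (aux_joinN T hT.measurable P hP n) ?_
    intro A hA x hx y hy
    have : ∃ f : Fin n → Set X, (∀ j, f j ∈ P) ∧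
      ⋂ j : Fin n, T^[(j : ℕ)] ⁻¹' f j = A := by simpa [joinN] using hA
    obtain ⟨f, hf, rfl⟩ := this
    funext k
    have h1 := hcu _ (hf k) _ (Set.mem_iInter.1 hx k)
    have h2 := hcu _ (hf k) _ (Set.mem_iInter.1 hy k)
    simp only [η, g, h1, h2]

theorem aux_le {X : Type*} [MetricSpace X] [CompactSpace X] [MeasurableSpace X] [BorelSpace X]
    (T : X → X) (hT : Continuous T) (μ : Measure X) (hμp : IsProbabilityMeasure μ)
    (ε ε' : ℝ) (hε : 0 < ε) (h : ε < ε') : RDistL1 T μ ε' ≤ infEntRate T μ ε := by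
  unfold infEntRate
  refine le_iInf₂ fun P hP => le_iInf fun hd => ?_
  unfold entRate
  refine le_liminf_of_le (by isBoundedDefault) ?_
  filter_upwards [eventually_gt_atTop 0] with n hn
  exact aux_main T hT μ hμp ε ε' hε h P hP hd n hn

/-- For every invariant Borel probability measure `μ`, the lower `L¹` rate distortion
dimension is bounded above by the lower Rényi information dimension. -/
theorem stmt11 {X : Type*} [MetricSpace X] [CompactSpace X] [MeasurableSpace X] [BorelSpace X]
    (T : X → X) (hT : Continuous T)
    (μ : Measure X) (hμp : IsProbabilityMeasure μ) (hμinv : MeasurePreserving T μ μ) :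
    Filter.liminf (fun ε : ℝ => RDistL1 T μ ε / ENNReal.ofReal (Real.log (1 / ε)))
        (nhdsWithin 0 (Set.Ioi 0))
      ≤ Filter.liminf (fun ε : ℝ => infEntRate T μ ε / ENNReal.ofReal (Real.log (1 / ε)))
        (nhdsWithin 0 (Set.Ioi 0)) := by
  refine le_of_forall_gt_imp_ge_of_dense fun L hL => ?_
  have hf := frequently_lt_of_liminf_lt (by isBoundedDefault) hL
  refine liminf_le_of_frequently_le ?_ (by isBoundedDefault)
  rw [frequently_iff] at hf ⊢
  intro U hU
  obtain ⟨u, hu, hUu⟩ := mem_nhdsGT_iff_exists_Ioo_subset.1 hU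
  have hu0 : (0 : ℝ) < u := hu
  obtain ⟨ε, ⟨hε0, hεu⟩, hlt⟩ := hf (Ioo_mem_nhdsGT (lt_min hu0 one_pos))
  have hε1 : ε < 1 := hεu.trans_le (min_le_right _ _)
  have hεu' : ε < u := hεu.trans_le (min_le_left _ _)
  have hcont : Tendsto (fun e : ℝ => infEntRate T μ ε / ENNReal.ofReal (Real.log (1 / e)))
      (𝓝[>] ε) (𝓝 (infEntRate T μ ε / ENNReal.ofReal (Real.log (1 / ε)))) := by
    refine Tendsto.mono_left ?_ nhdsWithin_le_nhds
    have hlog : 0 < Real.log (1 / ε) := Real.log_pos (by rw [lt_div_iff₀ hε0]; linarith)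
    refine ENNReal.Tendsto.const_div ?_ (Or.inl ENNReal.ofReal_ne_top)
    refine ENNReal.tendsto_ofReal ?_
    have : ContinuousAt (fun e : ℝ => Real.log (1 / e)) ε :=
      ContinuousAt.log (continuousAt_const.div continuousAt_id hε0.ne') (by positivity)
    exact this
  obtain ⟨e, he1, he2⟩ := ((hcont.eventually (gt_mem_nhds hlt)).and (Ioo_mem_nhdsGT hεu')).exists
  refine ⟨e, hUu ⟨hε0.trans he2.1, he2.2⟩, ?_⟩
  exact (ENNReal.div_le_div_right (aux_le T hT μ hμp ε e hε0 he2.1) _).trans he1.le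
end
end
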